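/- arXiv:2209.07847 — 2 statements merged into one kernel-verified Lean document; each statement's English description precedes it below -/
import Mathlib

section
/- Let s ≥ 2 and let G = H(a_1,…,a_s) be the multiple whiskered complete graph with a_i ≥ 1 whiskers at each vertex i of K_s. Then: (a) ν(G) = s; (b) G is cochordal; and (c) for 1 ≤ k ≤ s, one has g_{I(G)}(k) = 0 (i.e. depth(S/I(G)^{[k]}) = 2k − 1) if and only if ⌊s/2⌋ + 1 ≤ k ≤ s. -/
open MvPolynomial

section Preamble

variable (K : Type*) [Field K] {σ : Type*} [Fintype σ] [DecidableEq σ]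

/-- A (monic) monomial of the polynomial ring. -/
def IsMonomial (f : MvPolynomial σ K) : Prop :=
  ∃ d : σ →₀ ℕ, f = monomial d 1

/-- An ideal generated by monomials. -/
def IsMonomialIdeal (I : Ideal (MvPolynomial σ K)) : Prop :=
  ∃ A : Set (MvPolynomial σ K), (∀ u ∈ A, IsMonomial K u) ∧ I = Ideal.span A

/-- The unique minimal set of monomial generators `G(I)` of a monomial ideal:
the monomials of `I` that are minimal with respect to divisibility. -/
def minGens (I : Ideal (MvPolynomial σ K)) : Set (MvPolynomial σ K) :=
  {u | IsMonomial K u ∧ u ∈ I ∧ ∀ v, IsMonomial K v → v ∈ I → v ∣ u → v = u}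

/-- A squarefree monomial ideal. -/
def IsSqfreeMonomialIdeal (I : Ideal (MvPolynomial σ K)) : Prop :=
  IsMonomialIdeal K I ∧ ∀ u ∈ minGens K I, Squarefree u

/-- The `k`-th squarefree power `I^{[k]}`: the ideal generated by the squarefree
products of `k` minimal monomial generators of `I`. -/
noncomputable def sqPow (I : Ideal (MvPolynomial σ K)) (k : ℕ) : Ideal (MvPolynomial σ K) :=
  Ideal.span {u | Squarefree u ∧ ∃ l : List (MvPolynomial σ K),
    l.length = k ∧ (∀ f ∈ l, f ∈ minGens K I) ∧ u = l.prod}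

/-- `ν(I)`: the maximum length of a regular sequence of monomials in `I`. -/
noncomputable def monNu (I : Ideal (MvPolynomial σ K)) : ℕ :=
  sSup {m | ∃ l : List (MvPolynomial σ K), l.length = m ∧
    (∀ f ∈ l, IsMonomial K f ∧ f ∈ I) ∧
    RingTheory.Sequence.IsRegular (MvPolynomial σ K) l}

/-- The minimal degree `d` of a minimal monomial generator of `I`
(so `d_k = minDeg (I^{[k]})`). -/
noncomputable def minDeg (I : Ideal (MvPolynomial σ K)) : ℕ :=
  sInf (totalDegree '' minGens K I)

/-- `depth(S/I)`: the maximum length of an `S/I`-regular sequence of elements of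
the graded maximal ideal `(x_1, …, x_n)`. -/
noncomputable def qdepth (I : Ideal (MvPolynomial σ K)) : ℕ :=
  sSup {m | ∃ l : List (MvPolynomial σ K), l.length = m ∧
    (∀ f ∈ l, f ∈ Ideal.span (Set.range (X : σ → MvPolynomial σ K))) ∧
    RingTheory.Sequence.IsRegular (MvPolynomial σ K ⧸ I) l}

/-- `I` has linear quotients with respect to the ordering `L` of its minimal
monomial generators: each successive colon ideal is generated by variables. -/
def HasLinearQuotientsOrder (I : Ideal (MvPolynomial σ K))
    (L : List (MvPolynomial σ K)) : Prop :=
  L.Nodup ∧ (∀ u, u ∈ L ↔ u ∈ minGens K I) ∧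
  ∀ i : Fin L.length, 0 < (i : ℕ) →
    ∃ A : Set σ,
      Submodule.colon (Ideal.span {u | u ∈ L.take (i : ℕ)}) (Ideal.span {L.get i})
        = Ideal.span (X '' A)

/-- A monomial ideal with linear quotients. -/
def HasLinearQuotients (I : Ideal (MvPolynomial σ K)) : Prop :=
  ∃ L, HasLinearQuotientsOrder K I L

/-- A polymatroidal ideal: a monomial ideal generated in a single degree whose
minimal generators satisfy the exchange property. -/
def IsPolymatroidal (I : Ideal (MvPolynomial σ K)) : Prop :=
  IsMonomialIdeal K I ∧
  (∃ d, ∀ u ∈ minGens K I, totalDegree u = d) ∧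
  ∀ u ∈ minGens K I, ∀ v ∈ minGens K I, ∀ k : σ,
    degreeOf k v < degreeOf k u →
    ∃ l : σ, degreeOf l u < degreeOf l v ∧
      ∃ w, u = X k * w ∧ X l * w ∈ minGens K I

/-- A matroidal ideal: a polymatroidal ideal all of whose minimal generators are
squarefree. -/
def IsMatroidal (I : Ideal (MvPolynomial σ K)) : Prop :=
  IsPolymatroidal K I ∧ ∀ u ∈ minGens K I, Squarefree u

/-- The squarefree part of a monomial ideal: the ideal generated by its squarefree
minimal generators. -/
noncomputable def sqfPart (I : Ideal (MvPolynomial σ K)) : Ideal (MvPolynomial σ K) :=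
  Ideal.span {u | u ∈ minGens K I ∧ Squarefree u}

/-- The squarefree Veronese ideal `𝔪^{[d]}`, generated by all squarefree
monomials of degree `d`. -/
noncomputable def veronese (d : ℕ) : Ideal (MvPolynomial σ K) :=
  Ideal.span {u | ∃ F : Finset σ, F.card = d ∧ u = ∏ i ∈ F, X i}

/-- A chordal graph: no induced cycle of length greater than 3. -/
def IsChordal {V : Type*} (G : SimpleGraph V) : Prop :=
  ∀ m : ℕ, 4 ≤ m → ¬ ∃ f : ZMod m → V, Function.Injective f ∧
    ∀ i j : ZMod m, G.Adj (f i) (f j) ↔ (i = j + 1 ∨ j = i + 1)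

/-- A matching of `G`: a finite set of pairwise vertex-disjoint edges of `G`. -/
def IsMatching (G : SimpleGraph σ) (M : Finset (Sym2 σ)) : Prop :=
  (↑M ⊆ G.edgeSet) ∧ (M : Set (Sym2 σ)).Pairwise fun e f => ∀ v, v ∈ e → v ∉ f

/-- A `k`-matching of `G`. -/
def IsKMatching (G : SimpleGraph σ) (M : Finset (Sym2 σ)) (k : ℕ) : Prop :=
  IsMatching G M ∧ M.card = k

/-- The vertex set `V(M)` of a matching. -/
def mVerts (M : Finset (Sym2 σ)) : Finset σ :=
  Finset.univ.filter fun v => ∃ e ∈ M, v ∈ e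

/-- The squarefree monomial `∏_{v ∈ V(M)} x_v` attached to a matching. -/
noncomputable def matchMon (M : Finset (Sym2 σ)) : MvPolynomial σ K :=
  ∏ v ∈ mVerts M, X v

/-- The edge ideal `I(G)` of a finite simple graph `G`. -/
noncomputable def edgeIdeal (G : SimpleGraph σ) : Ideal (MvPolynomial σ K) :=
  Ideal.span {u | ∃ i j, G.Adj i j ∧ u = X i * X j}

/-- The `k`-th squarefree power `I(G)^{[k]}` of the edge ideal, generated by the
monomials `∏_{v ∈ V(M)} x_v` of the `k`-matchings `M` of `G`. -/
noncomputable def matchPow (G : SimpleGraph σ) (k : ℕ) : Ideal (MvPolynomial σ K) :=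
  Ideal.span {u | ∃ M : Finset (Sym2 σ), IsKMatching G M k ∧ u = matchMon K M}

/-- The matching number `ν(G)`. -/
noncomputable def matchNum (G : SimpleGraph σ) : ℕ :=
  sSup {k | ∃ M : Finset (Sym2 σ), IsKMatching G M k}

end Preamble

/-- Vertex set of the multiple whiskered complete graph `H(a_1, …, a_s)`: the
vertices of `K_s` together with `a i` whisker vertices for each vertex `i`. -/
abbrev WVert (s : ℕ) (a : Fin s → ℕ) := Fin s ⊕ (Σ i : Fin s, Fin (a i))

/-- The multiple whiskered complete graph `H(a_1, …, a_s)`: the complete graph on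
`[s]` with `a i` pendant vertices (whiskers) attached to each vertex `i`. -/
def whiskered (s : ℕ) (a : Fin s → ℕ) : SimpleGraph (WVert s a) :=
  SimpleGraph.fromRel fun x y =>
    match x, y with
    | Sum.inl _, Sum.inl _ => True
    | Sum.inl i, Sum.inr p => p.1 = i
    | _, _ => False



section ExtPart
universe u
open CategoryTheory Abelian

variable {R : Type u} [CommRing R] (m : Ideal R)

/-- vanishing of `Ext^i(R/m, M)` -/
def ZExt (M : Type u) [AddCommGroup M] [Module R M] (i : ℕ) : Prop :=
  Subsingleton (Ext (ModuleCat.of R (R ⧸ m)) (ModuleCat.of R M) i)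

variable {m}
variable {A B C : Type u} [AddCommGroup A] [Module R A] [AddCommGroup B] [Module R B]
  [AddCommGroup C] [Module R C]

lemma ZExt.of_subsingleton [Subsingleton A] (i : ℕ) : ZExt m A i := by
  refine ⟨fun x y => ?_⟩
  have h : (𝟙 (ModuleCat.of R A)) = 0 := by
    ext z
    exact Subsingleton.elim (α := A) _ _
  have key : ∀ z : Ext (ModuleCat.of R (R ⧸ m)) (ModuleCat.of R A) i, z = 0 := by
    intro z
    have := Ext.comp_mk₀_id z
    rw [h, Ext.mk₀_zero, Ext.comp_zero] at this
    exact this.symm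
  rw [key x, key y]

lemma shortExact_of (f : A →ₗ[R] B) (g : B →ₗ[R] C) (hf : Function.Injective f)
    (hg : Function.Surjective g) (h : Function.Exact f g) :
    (ModuleCat.shortComplexOfCompEqZero f g h.linearMap_comp_eq_zero).ShortExact where
  exact := ModuleCat.shortComplex_exact _ h
  mono_f := (ModuleCat.mono_iff_injective _).2 hf
  epi_g := (ModuleCat.epi_iff_surjective _).2 hg

lemma ZExt.mid (f : A →ₗ[R] B) (g : B →ₗ[R] C) (hf : Function.Injective f)
    (hg : Function.Surjective g) (h : Function.Exact f g) {i : ℕ}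
    (hA : ZExt m A i) (hC : ZExt m C i) : ZExt m B i := by
  have hS := shortExact_of f g hf hg h
  have hA' : Subsingleton (Ext (ModuleCat.of R (R ⧸ m)) (ModuleCat.of R A) i) := hA
  have hC' : Subsingleton (Ext (ModuleCat.of R (R ⧸ m)) (ModuleCat.of R C) i) := hC
  have key : ∀ z : Ext (ModuleCat.of R (R ⧸ m)) (ModuleCat.of R B) i, z = 0 := by
    intro z
    obtain ⟨y, hy⟩ := Ext.covariant_sequence_exact₂ _ hS z (hC'.elim _ _)
    rw [← hy, show y = 0 from hA'.elim _ _, Ext.zero_comp]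
  exact ⟨fun x y => by rw [key x, key y]⟩

lemma ZExt.left (f : A →ₗ[R] B) (g : B →ₗ[R] C) (hf : Function.Injective f)
    (hg : Function.Surjective g) (h : Function.Exact f g) {i : ℕ}
    (hC : ZExt m C i) (hB : ZExt m B (i + 1)) : ZExt m A (i + 1) := by
  have hS := shortExact_of f g hf hg h
  have hB' : Subsingleton (Ext (ModuleCat.of R (R ⧸ m)) (ModuleCat.of R B) (i+1)) := hB
  have hC' : Subsingleton (Ext (ModuleCat.of R (R ⧸ m)) (ModuleCat.of R C) i) := hC
  have key : ∀ z : Ext (ModuleCat.of R (R ⧸ m)) (ModuleCat.of R A) (i+1), z = 0 := by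
    intro z
    obtain ⟨y, hy⟩ := Ext.covariant_sequence_exact₁ _ hS z (hB'.elim _ _) rfl
    rw [← hy, show y = 0 from hC'.elim _ _, Ext.zero_comp]
  exact ⟨fun x y => by rw [key x, key y]⟩

lemma ZExt.right (f : A →ₗ[R] B) (g : B →ₗ[R] C) (hf : Function.Injective f)
    (hg : Function.Surjective g) (h : Function.Exact f g) {i : ℕ}
    (hB : ZExt m B i) (hA : ZExt m A (i + 1)) : ZExt m C i := by
  have hS := shortExact_of f g hf hg h
  have hB' : Subsingleton (Ext (ModuleCat.of R (R ⧸ m)) (ModuleCat.of R B) i) := hB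
  have hA' : Subsingleton (Ext (ModuleCat.of R (R ⧸ m)) (ModuleCat.of R A) (i+1)) := hA
  have key : ∀ z : Ext (ModuleCat.of R (R ⧸ m)) (ModuleCat.of R C) i, z = 0 := by
    intro z
    obtain ⟨y, hy⟩ := Ext.covariant_sequence_exact₃ _ hS z rfl (hA'.elim _ _)
    rw [← hy, show y = 0 from hB'.elim _ _, Ext.zero_comp]
  exact ⟨fun x y => by rw [key x, key y]⟩

lemma smul_comp_zero {x : R} (hx : x ∈ m) (f : A →ₗ[R] A) (hfx : ∀ a, f a = x • a) {i : ℕ}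
    (z : Ext (ModuleCat.of R (R ⧸ m)) (ModuleCat.of R A) i) :
    z.comp (Ext.mk₀ (ModuleCat.ofHom f)) (add_zero i) = 0 := by
  have hf : ModuleCat.ofHom f = x • 𝟙 (ModuleCat.of R A) := by
    ext a
    exact hfx a
  have h0 : x • 𝟙 (ModuleCat.of R (R ⧸ m)) = 0 := by
    ext
    change x • (1 : R ⧸ m) = 0
    rw [Algebra.smul_def, mul_one]
    exact Ideal.Quotient.eq_zero_iff_mem.2 hx
  rw [hf, Ext.mk₀_smul, Ext.comp_smul, ← Ext.smul_comp, Ext.comp_mk₀_id]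
  have : x • z = (Ext.mk₀ (x • 𝟙 (ModuleCat.of R (R ⧸ m)))).comp z (zero_add i) := by
    rw [Ext.mk₀_smul, Ext.smul_comp, Ext.mk₀_id_comp]
  rw [this, h0, Ext.mk₀_zero, Ext.zero_comp]

lemma ZExt.cone_succ {x : R} (hx : x ∈ m) (f : A →ₗ[R] A) (hfx : ∀ a, f a = x • a)
    (g : A →ₗ[R] C) (hf : Function.Injective f)
    (hg : Function.Surjective g) (h : Function.Exact f g) {i : ℕ}
    (hC : ZExt m C i) : ZExt m A (i + 1) := by
  have hS := shortExact_of f g hf hg h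
  have hC' : Subsingleton (Ext (ModuleCat.of R (R ⧸ m)) (ModuleCat.of R C) i) := hC
  have key : ∀ z : Ext (ModuleCat.of R (R ⧸ m)) (ModuleCat.of R A) (i+1), z = 0 := by
    intro z
    obtain ⟨y, hy⟩ := Ext.covariant_sequence_exact₁ _ hS z (smul_comp_zero hx f hfx z) rfl
    rw [← hy, show y = 0 from hC'.elim _ _, Ext.zero_comp]
  exact ⟨fun x y => by rw [key x, key y]⟩

lemma ZExt.cone_zero {x : R} (hx : x ∈ m) (f : A →ₗ[R] A) (hfx : ∀ a, f a = x • a)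
    (hf : Function.Injective f) : ZExt m A 0 := by
  have : Mono (ModuleCat.ofHom f) := (ModuleCat.mono_iff_injective _).2 hf
  have key : ∀ z : Ext (ModuleCat.of R (R ⧸ m)) (ModuleCat.of R A) 0, z = 0 := by
    intro z
    apply Ext.postcomp_mk₀_injective_of_mono _ (ModuleCat.ofHom f)
    rw [map_zero]
    exact smul_comp_zero hx f hfx z
  exact ⟨fun x y => by rw [key x, key y]⟩

lemma ZExt.congr (e : A ≃ₗ[R] B) {i : ℕ} (h : ZExt m A i) : ZExt m B i := by
  refine ZExt.mid (C := PUnit) e.toLinearMap 0 e.injective (fun x => ⟨0, rfl⟩) ?_ h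
    (ZExt.of_subsingleton _)
  intro b
  exact ⟨fun _ => e.surjective b, fun _ => rfl⟩

lemma not_ZExt_zero (hm : m ≠ ⊤) : ¬ ZExt m (R ⧸ m) 0 := by
  intro h
  have h' : Subsingleton (Ext (ModuleCat.of R (R ⧸ m)) (ModuleCat.of R (R ⧸ m)) 0) := h
  have : Subsingleton (ModuleCat.of R (R ⧸ m) ⟶ ModuleCat.of R (R ⧸ m)) :=
    Ext.addEquiv₀.subsingleton_congr.mp h'
  have h1 : (𝟙 (ModuleCat.of R (R ⧸ m))) = 0 := this.elim _ _
  have h2 : (1 : R ⧸ m) = 0 := by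
    have := congrArg (fun f => f.hom (1 : R ⧸ m)) h1
    exact this
  apply hm
  rw [Ideal.eq_top_iff_one]
  exact Ideal.Quotient.eq_zero_iff_mem.1 (by simpa using h2)

lemma rees [IsNoetherianRing R] (I : Ideal R) (hI : I ≤ m) (hm : m ≠ ⊤) (n : ℕ) :
    (∀ i < n, ZExt m (R ⧸ I) i) ↔
    ∃ rs : List R, rs.length = n ∧ (∀ r ∈ rs, r ∈ m) ∧
      RingTheory.Sequence.IsRegular (R ⧸ I) rs := by
  have hlt : m • (⊤ : Submodule R (ModuleCat.of R (R ⧸ I))) < ⊤ := by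
    rw [lt_top_iff_ne_top]
    intro h
    have h1 : (Ideal.Quotient.mk I 1) ∈ m • (⊤ : Submodule R (R ⧸ I)) := by
      have := (Submodule.eq_top_iff'.1 h) (Ideal.Quotient.mk I 1)
      exact this
    have h2 : m • (⊤ : Submodule R (R ⧸ I)) ≤ Submodule.map I.mkQ m := by
      rw [Submodule.smul_le]
      intro r hr n _
      obtain ⟨n, rfl⟩ := Submodule.mkQ_surjective I n
      rw [← map_smul]
      exact Submodule.mem_map_of_mem (m.mul_mem_right n hr)
    obtain ⟨y, hy, hy2⟩ := h2 h1
    have h3 : y - 1 ∈ I := Ideal.Quotient.eq.1 hy2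
    apply hm
    rw [Ideal.eq_top_iff_one]
    have := m.sub_mem hy (hI h3)
    simpa using this
  have hs : Module.support R (ModuleCat.of R (R ⧸ m)) = PrimeSpectrum.zeroLocus m := by
    change Module.support R (R ⧸ m) = _
    rw [Module.support_eq_zeroLocus, Ideal.annihilator_quotient]
  have fI : Module.Finite R (ModuleCat.of R (R ⧸ I)) := inferInstanceAs (Module.Finite R (R ⧸ I))
  have fm : Module.Finite R (ModuleCat.of R (R ⧸ m)) := inferInstanceAs (Module.Finite R (R ⧸ m))
  constructor
  · intro h
    exact ModuleCat.exists_isRegular_of_exists_subsingleton_ext m n (ModuleCat.of R (R ⧸ I)) hlt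
      (ModuleCat.of R (R ⧸ m)) hs h
  · rintro ⟨rs, rfl, hmem, hreg⟩
    exact ModuleCat.subsingleton_ext_of_exists_isRegular m (ModuleCat.of R (R ⧸ m)) hs.subset
      (ModuleCat.of R (R ⧸ I)) hlt rs hmem hreg

end ExtPart

section SeqPart
universe u
variable {R : Type u} [CommRing R] {m : Ideal R}

/-- multiplication by `x` as a map of quotients -/
def mulQ (x : R) (J I : Ideal R) (h : ∀ p, x * p ∈ I ↔ p ∈ J) : (R ⧸ J) →ₗ[R] (R ⧸ I) :=
  Submodule.mapQ J I (LinearMap.lsmul R R x) (fun p hp => (h p).2 hp)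

lemma mulQ_inj (x : R) (J I : Ideal R) (h : ∀ p, x * p ∈ I ↔ p ∈ J) :
    Function.Injective (mulQ x J I h) := by
  rw [injective_iff_map_eq_zero]
  intro a ha
  obtain ⟨p, rfl⟩ := Submodule.mkQ_surjective J a
  have : x * p ∈ I := (Submodule.Quotient.mk_eq_zero I).1 ha
  exact (Submodule.Quotient.mk_eq_zero J).2 ((h p).1 this)

/-- the canonical projection between quotients -/
def facQ (I L : Ideal R) (h : I ≤ L) : (R ⧸ I) →ₗ[R] (R ⧸ L) :=
  Submodule.mapQ I L LinearMap.id h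

lemma facQ_surj (I L : Ideal R) (h : I ≤ L) : Function.Surjective (facQ I L h) := by
  intro a
  obtain ⟨p, rfl⟩ := Submodule.mkQ_surjective L a
  exact ⟨I.mkQ p, rfl⟩

lemma mulQ_exact (x : R) (J I L : Ideal R) (h : ∀ p, x * p ∈ I ↔ p ∈ J) (hIL : I ≤ L)
    (hL : ∀ p, p ∈ L ↔ ∃ q, p - x * q ∈ I) :
    Function.Exact (mulQ x J I h) (facQ I L hIL) := by
  intro a
  obtain ⟨p, rfl⟩ := Submodule.mkQ_surjective I a
  constructor
  · intro hp
    have : p ∈ L := (Submodule.Quotient.mk_eq_zero L).1 hp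
    obtain ⟨q, hq⟩ := (hL p).1 this
    refine ⟨J.mkQ q, ?_⟩
    change Submodule.Quotient.mk (x * q) = Submodule.Quotient.mk p
    rw [eq_comm]
    exact (Submodule.Quotient.eq I).2 hq
  · rintro ⟨b, hb⟩
    obtain ⟨q, rfl⟩ := Submodule.mkQ_surjective J b
    have h1 : p - x * q ∈ I := (Submodule.Quotient.eq I).1 hb.symm
    exact (Submodule.Quotient.mk_eq_zero L).2 ((hL p).2 ⟨q, h1⟩)

lemma mv_ZExt (A B : Ideal R) {i : ℕ} (hA : ZExt m (R ⧸ A) i) (hB : ZExt m (R ⧸ B) i)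
    (hI : ZExt m (R ⧸ (A ⊓ B)) (i + 1)) : ZExt m (R ⧸ (A ⊔ B)) i := by
  have hAB : ZExt m ((R ⧸ A) × (R ⧸ B)) i :=
    ZExt.mid (LinearMap.inl R _ _) (LinearMap.snd R _ _) LinearMap.inl_injective
      LinearMap.snd_surjective Function.Exact.inl_snd hA hB
  refine ZExt.right ((facQ (A ⊓ B) A inf_le_left).prod (facQ (A ⊓ B) B inf_le_right))
    ((facQ A (A ⊔ B) le_sup_left).coprod (-(facQ B (A ⊔ B) le_sup_right))) ?_ ?_ ?_ hAB hI
  · rw [injective_iff_map_eq_zero]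
    intro a ha
    obtain ⟨p, rfl⟩ := Submodule.mkQ_surjective _ a
    have h1 : p ∈ A := (Submodule.Quotient.mk_eq_zero A).1 (congrArg Prod.fst ha)
    have h2 : p ∈ B := (Submodule.Quotient.mk_eq_zero B).1 (congrArg Prod.snd ha)
    exact (Submodule.Quotient.mk_eq_zero _).2 ⟨h1, h2⟩
  · intro c
    obtain ⟨a, rfl⟩ := facQ_surj A (A ⊔ B) le_sup_left c
    exact ⟨(a, 0), by simp⟩
  · rintro ⟨a, b⟩
    obtain ⟨p, rfl⟩ := Submodule.mkQ_surjective _ a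
    obtain ⟨q, rfl⟩ := Submodule.mkQ_surjective _ b
    constructor
    · intro h
      have h0 : p - q ∈ A ⊔ B := by
        apply (Submodule.Quotient.eq (A ⊔ B)).1
        have h' : (facQ A (A ⊔ B) le_sup_left) (A.mkQ p)
          + -((facQ B (A ⊔ B) le_sup_right) (B.mkQ q)) = 0 := h
        rw [← sub_eq_add_neg, sub_eq_zero] at h'
        exact h'
      obtain ⟨y, hy, z, hz, hyz⟩ := Submodule.mem_sup.1 h0
      refine ⟨(A ⊓ B).mkQ (p - y), ?_⟩
      refine Prod.ext ?_ ?_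
      · change Submodule.Quotient.mk (p - y) = Submodule.Quotient.mk p
        refine (Submodule.Quotient.eq A).2 ?_
        simpa using hy
      · change Submodule.Quotient.mk (p - y) = Submodule.Quotient.mk q
        refine (Submodule.Quotient.eq B).2 ?_
        have : p - y - q = z := by linear_combination -hyz
        rwa [this]
    · rintro ⟨c, hc⟩
      obtain ⟨r, rfl⟩ := Submodule.mkQ_surjective _ c
      rw [← hc]
      change (facQ A (A ⊔ B) le_sup_left) (A.mkQ r)
          + -((facQ B (A ⊔ B) le_sup_right) (B.mkQ r)) = 0
      rw [← sub_eq_add_neg, sub_eq_zero]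
      rfl

end SeqPart

section SR
set_option linter.unusedSectionVars false
universe u
variable (K : Type u) [Field K] {σ : Type} [Fintype σ] [DecidableEq σ]

/-- the Stanley-Reisner ideal of a complex -/
def srI (Δ : LowerSet (Finset σ)) : Ideal (MvPolynomial σ K) where
  carrier := {p | ∀ d : σ →₀ ℕ, d.support ∈ Δ → coeff d p = 0}
  zero_mem' := by intro d _; simp
  add_mem' := by
    intro p q hp hq d hd
    rw [coeff_add, hp d hd, hq d hd, add_zero]
  smul_mem' := by
    intro c p hp d hd
    rw [smul_eq_mul, coeff_mul]
    refine Finset.sum_eq_zero fun x hx => ?_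
    rw [Finset.HasAntidiagonal.mem_antidiagonal] at hx
    rw [hp x.2 (Δ.lower (Finsupp.support_mono (by rw [← hx]; exact le_add_self)) hd), mul_zero]

variable {K}
lemma mem_srI {Δ : LowerSet (Finset σ)} {p : MvPolynomial σ K} :
    p ∈ srI K Δ ↔ ∀ d : σ →₀ ℕ, d.support ∈ Δ → coeff d p = 0 := Iff.rfl

/-- star of a vertex -/
def lk (x : σ) (Δ : LowerSet (Finset σ)) : LowerSet (Finset σ) :=
  ⟨{F | insert x F ∈ Δ}, fun _ _ h hF => Δ.lower (Finset.insert_subset_insert x h) hF⟩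

/-- deletion of a vertex -/
def del (x : σ) (Δ : LowerSet (Finset σ)) : LowerSet (Finset σ) :=
  ⟨{F | F ∈ Δ ∧ x ∉ F}, fun _ _ h hF => ⟨Δ.lower h hF.1, fun hx => hF.2 (h hx)⟩⟩

lemma mem_lk {x : σ} {Δ : LowerSet (Finset σ)} {F : Finset σ} :
    F ∈ lk x Δ ↔ insert x F ∈ Δ := Iff.rfl
lemma mem_del {x : σ} {Δ : LowerSet (Finset σ)} {F : Finset σ} :
    F ∈ del x Δ ↔ F ∈ Δ ∧ x ∉ F := Iff.rfl

lemma support_add_single (x : σ) (d : σ →₀ ℕ) :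
    (Finsupp.single x 1 + d).support = insert x d.support := by
  ext y
  by_cases h : y = x
  · subst h; simp
  · simp [h, Finsupp.single_apply, Ne.symm h]

lemma X_mul_mem (x : σ) (Δ : LowerSet (Finset σ)) (p : MvPolynomial σ K) :
    X x * p ∈ srI K Δ ↔ p ∈ srI K (lk x Δ) := by
  simp only [mem_srI]
  constructor
  · intro h d hd
    have := h (Finsupp.single x 1 + d) (by rw [support_add_single]; exact hd)
    rwa [coeff_X_mul] at this
  · intro h d hd
    rw [coeff_X_mul']
    split_ifs with hx
    · apply h
      rw [mem_lk, ← support_add_single]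
      have hle : Finsupp.single x 1 ≤ d := by
        rw [Finsupp.single_le_iff]
        have := Finsupp.mem_support_iff.1 hx
        omega
      rwa [add_tsub_cancel_of_le hle]
    · rfl

lemma srI_le_del (x : σ) (Δ : LowerSet (Finset σ)) : srI K Δ ≤ srI K (del x Δ) :=
  fun _ hp d hd => hp d hd.1

lemma mem_srI_del (x : σ) (Δ : LowerSet (Finset σ)) (p : MvPolynomial σ K) :
    p ∈ srI K (del x Δ) ↔ ∃ q, p - X x * q ∈ srI K Δ := by
  constructor
  · intro h
    refine ⟨p.divMonomial (Finsupp.single x 1), ?_⟩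
    have h1 : p - X x * (p.divMonomial (Finsupp.single x 1)) = p.modMonomial (Finsupp.single x 1) := by
      rw [sub_eq_iff_eq_add, add_comm]
      exact (divMonomial_add_modMonomial_single p x).symm
    rw [h1]
    intro d hd
    by_cases hle : Finsupp.single x 1 ≤ d
    · exact coeff_modMonomial_of_le _ hle
    · rw [coeff_modMonomial_of_not_le _ hle]
      refine h d ⟨hd, fun hx => hle ?_⟩
      rw [Finsupp.single_le_iff]
      have := Finsupp.mem_support_iff.1 hx
      omega
  · rintro ⟨q, hq⟩
    have h1 := srI_le_del x Δ hq
    have h2 : X x * q ∈ srI K (del x Δ) := by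
      rw [X_mul_mem]
      intro d hd
      exact absurd (Finset.mem_insert_self _ _) hd.2
    simpa using add_mem h1 h2

lemma srI_sup (Δ₁ Δ₂ : LowerSet (Finset σ)) : srI K (Δ₁ ⊔ Δ₂) = srI K Δ₁ ⊓ srI K Δ₂ := by
  ext p
  simp only [Submodule.mem_inf, mem_srI, LowerSet.mem_sup_iff]
  constructor
  · intro h
    exact ⟨fun d hd => h d (Or.inl hd), fun d hd => h d (Or.inr hd)⟩
  · rintro ⟨h1, h2⟩ d (hd | hd)
    · exact h1 d hd
    · exact h2 d hd

lemma srI_inf (Δ₁ Δ₂ : LowerSet (Finset σ)) : srI K (Δ₁ ⊓ Δ₂) = srI K Δ₁ ⊔ srI K Δ₂ := by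
  classical
  apply le_antisymm
  · intro p hp
    rw [Submodule.mem_sup]
    rw [← p.support_sum_monomial_coeff]
    have key : ∀ d ∈ p.support, monomial d (coeff d p) ∈ srI K Δ₁ ⊔ srI K Δ₂ := by
      intro d hd
      by_cases h1 : d.support ∈ Δ₁
      · by_cases h2 : d.support ∈ Δ₂
        · rw [hp d ⟨h1, h2⟩]; simp
        · refine Submodule.mem_sup_right ?_
          intro e he
          rw [coeff_monomial, if_neg]
          rintro rfl
          exact h2 he
      · refine Submodule.mem_sup_left ?_
        intro e he
        rw [coeff_monomial, if_neg]
        rintro rfl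
        exact h1 he
    exact Submodule.mem_sup.1 (Submodule.sum_mem _ key)
  · refine sup_le ?_ ?_
    · intro p hp d hd
      exact hp d hd.1
    · intro p hp d hd
      exact hp d hd.2

variable (K σ) in
/-- the graded maximal ideal -/
noncomputable def mI : Ideal (MvPolynomial σ K) :=
  Ideal.span (Set.range (X : σ → MvPolynomial σ K))

lemma mem_mI {p : MvPolynomial σ K} : p ∈ mI K σ ↔ coeff 0 p = 0 := by
  rw [mI, ← Set.image_univ, mem_ideal_span_X_image]
  constructor
  · intro h
    by_contra h0
    obtain ⟨i, _, hi⟩ := h 0 (mem_support_iff.2 h0)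
    exact hi rfl
  · intro h d hd
    by_contra hcon
    push Not at hcon
    have : d = 0 := by ext i; exact hcon i (Set.mem_univ i)
    subst this
    exact mem_support_iff.1 hd h

lemma mI_ne_top : mI K σ ≠ ⊤ := by
  intro h
  have : (1 : MvPolynomial σ K) ∈ mI K σ := h ▸ Submodule.mem_top
  rw [mem_mI] at this
  simp at this

lemma srI_le_mI {Δ : LowerSet (Finset σ)} (h : ∅ ∈ Δ) : srI K Δ ≤ mI K σ := by
  intro p hp
  rw [mem_mI]
  exact hp 0 (by simpa using h)

lemma X_mem_mI (x : σ) : (X x : MvPolynomial σ K) ∈ mI K σ :=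
  Ideal.subset_span ⟨x, rfl⟩

variable (K) in
/-- vanishing of the `i`-th Ext module of `K[Δ]` -/
def Zc (Δ : LowerSet (Finset σ)) (i : ℕ) : Prop := ZExt (mI K σ) (MvPolynomial σ K ⧸ srI K Δ) i

variable (K) in
/-- depth of `K[Δ]` at least `r` -/
def Dc (Δ : LowerSet (Finset σ)) (r : ℕ) : Prop := ∀ i < r, Zc K Δ i

lemma Dc.mono {Δ : LowerSet (Finset σ)} {r q : ℕ} (h : Dc K Δ r) (hq : q ≤ r) : Dc K Δ q :=
  fun i hi => h i (hi.trans_le hq)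

lemma Dc_bot {Δ : LowerSet (Finset σ)} (h : ∅ ∉ Δ) (r : ℕ) : Dc K Δ r := by
  intro i _
  have : srI K Δ = ⊤ := by
    rw [Ideal.eq_top_iff_one]
    intro d hd
    exact absurd (Δ.lower (Finset.empty_subset _) hd) h
  have : Subsingleton (MvPolynomial σ K ⧸ srI K Δ) := by
    rw [this]; infer_instance
  exact ZExt.of_subsingleton _

lemma Dc_of_lk_del (x : σ) {Δ : LowerSet (Finset σ)} {r : ℕ} (h1 : Dc K (lk x Δ) r)
    (h2 : Dc K (del x Δ) r) : Dc K Δ r := fun i hi =>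
  ZExt.mid (mulQ (X x) _ _ (X_mul_mem x Δ)) (facQ _ _ (srI_le_del x Δ)) (mulQ_inj _ _ _ _)
    (facQ_surj _ _ _) (mulQ_exact _ _ _ _ _ _ (mem_srI_del x Δ)) (h1 i hi) (h2 i hi)

lemma Zc_lk (x : σ) {Δ : LowerSet (Finset σ)} {i : ℕ} (h1 : Zc K (del x Δ) i)
    (h2 : Zc K Δ (i + 1)) : Zc K (lk x Δ) (i + 1) :=
  ZExt.left (mulQ (X x) _ _ (X_mul_mem x Δ)) (facQ _ _ (srI_le_del x Δ)) (mulQ_inj _ _ _ _)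
    (facQ_surj _ _ _) (mulQ_exact _ _ _ _ _ _ (mem_srI_del x Δ)) h1 h2

lemma lk_eq_of_cone {x : σ} {Δ : LowerSet (Finset σ)} (h : ∀ F ∈ Δ, insert x F ∈ Δ) :
    lk x Δ = Δ := by
  ext F
  exact ⟨fun hF => Δ.lower (Finset.subset_insert _ _) hF, fun hF => h F hF⟩

lemma X_mul_mem_cone {x : σ} {Δ : LowerSet (Finset σ)} (h : ∀ F ∈ Δ, insert x F ∈ Δ)
    (p : MvPolynomial σ K) : X x * p ∈ srI K Δ ↔ p ∈ srI K Δ := by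
  rw [X_mul_mem, lk_eq_of_cone h]

lemma Dc_cone (x : σ) {Δ : LowerSet (Finset σ)} (h : ∀ F ∈ Δ, insert x F ∈ Δ) {r : ℕ}
    (h1 : Dc K (del x Δ) r) : Dc K Δ (r + 1) := by
  have hsm : ∀ a, mulQ (X x) _ _ (X_mul_mem_cone (K := K) h) a = (X x : MvPolynomial σ K) • a := by
    intro a
    obtain ⟨p, rfl⟩ := Submodule.mkQ_surjective _ a
    rfl
  intro i hi
  cases i with
  | zero => exact ZExt.cone_zero (X_mem_mI x) _ hsm (mulQ_inj _ _ _ _)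
  | succ i =>
    exact ZExt.cone_succ (X_mem_mI x) _ hsm (facQ _ _ (srI_le_del x Δ)) (mulQ_inj _ _ _ _)
      (facQ_surj _ _ _) (mulQ_exact _ _ _ _ _ _ (mem_srI_del x Δ)) (h1 i (by omega))

lemma Zc_cone (x : σ) {Δ : LowerSet (Finset σ)} (h : ∀ F ∈ Δ, insert x F ∈ Δ) {i : ℕ}
    (h1 : Zc K Δ i) (h2 : Zc K Δ (i + 1)) : Zc K (del x Δ) i :=
  ZExt.right (mulQ (X x) _ _ (X_mul_mem_cone (K := K) h)) (facQ _ _ (srI_le_del x Δ))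
    (mulQ_inj _ _ _ _)
    (facQ_surj _ _ _) (mulQ_exact _ _ _ _ _ _ (mem_srI_del x Δ)) h1 h2

lemma Zc_mv {Δ₁ Δ₂ : LowerSet (Finset σ)} {i : ℕ} (h1 : Zc K Δ₁ i) (h2 : Zc K Δ₂ i)
    (h : Zc K (Δ₁ ⊔ Δ₂) (i + 1)) : Zc K (Δ₁ ⊓ Δ₂) i := by
  unfold Zc at *
  rw [srI_sup] at h
  rw [srI_inf]
  exact mv_ZExt _ _ h1 h2 h

/-- deletion of a set of vertices -/
def delA (A : Finset σ) (Δ : LowerSet (Finset σ)) : LowerSet (Finset σ) :=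
  ⟨{F | F ∈ Δ ∧ Disjoint F A}, fun _ _ h hF => ⟨Δ.lower h hF.1, hF.2.mono_left h⟩⟩

lemma Dc_free (A : Finset σ) : ∀ {Δ : LowerSet (Finset σ)} {r : ℕ},
    (∀ F ∈ Δ, ∀ a ∈ A, insert a F ∈ Δ) → Dc K (delA A Δ) r → Dc K Δ (A.card + r) := by
  induction A using Finset.induction_on with
  | empty =>
    intro Δ r _ h
    have : delA ∅ Δ = Δ := by
      ext F
      exact ⟨fun h => h.1, fun h => ⟨h, Finset.disjoint_empty_right _⟩⟩
    rw [this] at h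
    simpa using h
  | insert a A ha ih =>
    intro Δ r hfree h
    rw [Finset.card_insert_of_notMem ha, add_right_comm]
    refine Dc_cone a (fun F hF => hfree F hF a (Finset.mem_insert_self _ _)) (ih ?_ ?_)
    · intro F hF b hb
      refine ⟨hfree F hF.1 b (Finset.mem_insert_of_mem hb), fun hab => ?_⟩
      rcases Finset.mem_insert.1 hab with rfl | h'
      · exact ha hb
      · exact hF.2 h'
    · have : delA A (del a Δ) = delA (insert a A) Δ := by
        ext F
        constructor
        · rintro ⟨⟨h1, h2⟩, h3⟩
          exact ⟨h1, by rw [Finset.disjoint_insert_right]; exact ⟨h2, h3⟩⟩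
        · rintro ⟨h1, h2⟩
          rw [Finset.disjoint_insert_right] at h2
          exact ⟨⟨h1, h2.1⟩, h2.2⟩
      rwa [this]

lemma Dc_gen (C : Finset σ) : ∀ {Δ : LowerSet (Finset σ)} {r : ℕ},
    (∀ F ∈ Δ, F ⊆ C) → (∀ F ⊆ C, F.card ≤ r → F ∈ Δ) → r ≤ C.card → Dc K Δ r := by
  induction C using Finset.induction_on with
  | empty =>
    intro Δ r _ _ hr i hi
    simp at hr
    omega
  | insert x C hx ih =>
    intro Δ r h1 h2 hr
    cases r with
    | zero => intro i hi; omega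
    | succ r =>
      rw [Finset.card_insert_of_notMem hx] at hr
      have hsub : ∀ F ∈ Δ, x ∉ F → F ⊆ C := fun F hF hxF =>
        (Finset.subset_insert_iff_of_notMem hxF).1 (h1 F hF)
      by_cases hc : r + 1 ≤ C.card
      · refine Dc_of_lk_del x (Dc_cone x ?_ (ih ?_ ?_ (by omega))) (ih ?_ ?_ hc)
        · intro F hF
          rw [mem_lk, Finset.insert_idem]
          exact hF
        · intro F hF
          exact hsub F (Δ.lower (Finset.subset_insert x F) hF.1) hF.2
        · intro F hF hcard
          refine ⟨h2 _ (Finset.insert_subset_insert x hF) ?_, fun h => hx (hF h)⟩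
          exact (Finset.card_insert_le _ _).trans (by omega)
        · intro F hF
          exact hsub F hF.1 hF.2
        · intro F hF hcard
          exact ⟨h2 F (hF.trans (Finset.subset_insert _ _)) hcard, fun h => hx (hF h)⟩
      · have hall : ∀ F ⊆ insert x C, F ∈ Δ := by
          intro F hF
          refine h2 F hF ((Finset.card_le_card hF).trans ?_)
          rw [Finset.card_insert_of_notMem hx]
          omega
        refine Dc_cone x ?_ (ih ?_ ?_ (by omega))
        · intro F hF
          exact hall _ (Finset.insert_subset (Finset.mem_insert_self _ _) (h1 F hF))
        · intro F hF
          exact hsub F hF.1 hF.2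
        · intro F hF _
          exact ⟨hall F (hF.trans (Finset.subset_insert _ _)), fun h => hx (hF h)⟩

lemma Dc_free_gen (A C : Finset σ) {Δ : LowerSet (Finset σ)} {r : ℕ}
    (hfree : ∀ F ∈ Δ, ∀ a ∈ A, insert a F ∈ Δ)
    (h1 : ∀ F ∈ Δ, Disjoint F A → F ⊆ C) (hAC : Disjoint C A)
    (h2 : ∀ F ⊆ C, F.card ≤ r → F ∈ Δ) (hr : r ≤ C.card) : Dc K Δ (A.card + r) := by
  refine Dc_free A hfree (Dc_gen C ?_ ?_ hr)
  · intro F hF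
    exact h1 F hF.1 hF.2
  · intro F hF hc
    exact ⟨h2 F hF hc, hAC.mono_left hF⟩

lemma not_Zc_simplex (A : Finset σ) : ¬ Zc K (LowerSet.Iic A) A.card := by
  induction A using Finset.induction_on with
  | empty =>
    have : srI K (LowerSet.Iic (∅ : Finset σ)) = mI K σ := by
      ext p
      rw [mem_mI, mem_srI]
      constructor
      · intro h; exact h 0 (by simp)
      · intro h d hd
        have : d = 0 := by simpa using hd
        rwa [this]
    unfold Zc
    rw [this]
    exact not_ZExt_zero mI_ne_top
  | insert a A ha ih =>
    intro h
    apply ih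
    have hD : Dc K (LowerSet.Iic (insert a A)) (insert a A).card :=
      Dc_gen (insert a A) (fun F hF => hF) (fun F hF _ => hF) le_rfl
    rw [Finset.card_insert_of_notMem ha] at h hD
    have := Zc_cone a (Δ := LowerSet.Iic (insert a A)) (K := K) (i := A.card) ?_
      (hD _ (by omega)) h
    · have he : del a (LowerSet.Iic (insert a A)) = LowerSet.Iic A := by
        ext F
        constructor
        · rintro ⟨h1, h2⟩
          exact (Finset.subset_insert_iff_of_notMem h2).1 h1
        · intro h1
          have h1' : F ⊆ A := h1
          exact ⟨h1'.trans (Finset.subset_insert _ _), fun h => ha (h1' h)⟩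
      rwa [he] at this
    · intro F hF
      exact Finset.insert_subset (Finset.mem_insert_self _ _) hF

end SR

section Graph
set_option linter.unusedSectionVars false
variable {σ : Type} [Fintype σ] [DecidableEq σ] {G : SimpleGraph σ}

lemma mem_mVerts {M : Finset (Sym2 σ)} {v : σ} : v ∈ mVerts M ↔ ∃ e ∈ M, v ∈ e := by
  simp [mVerts]

lemma card_mVerts {M : Finset (Sym2 σ)} {k : ℕ} (h : IsKMatching G M k) :
    (mVerts M).card = 2 * k := by
  have h1 : mVerts M = M.biUnion Sym2.toFinset := by
    ext v; simp [mem_mVerts]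
  rw [h1, Finset.card_biUnion]
  · rw [Finset.sum_congr rfl (g := fun _ => 2), Finset.sum_const, h.2, smul_eq_mul, mul_comm]
    intro e he
    exact Sym2.card_toFinset_of_not_isDiag e (G.not_isDiag_of_mem_edgeSet (h.1.1 he))
  · intro e he f hf hne
    change Disjoint e.toFinset f.toFinset
    rw [Finset.disjoint_left]
    intro v hv hv'
    exact h.1.2 he hf hne v (by simpa using hv) (by simpa using hv')

lemma isKMatching_empty : IsKMatching G ∅ 0 := by
  refine ⟨⟨by simp, by simp⟩, rfl⟩

lemma IsKMatching.add {M : Finset (Sym2 σ)} {k : ℕ} (h : IsKMatching G M k) {u v : σ}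
    (huv : G.Adj u v) (hu : u ∉ mVerts M) (hv : v ∉ mVerts M) :
    IsKMatching G (insert s(u, v) M) (k + 1) ∧
      mVerts (insert s(u, v) M) = insert u (insert v (mVerts M)) := by
  have hd : ∀ e ∈ M, u ∉ e ∧ v ∉ e := fun e he =>
    ⟨fun h' => hu (mem_mVerts.2 ⟨e, he, h'⟩), fun h' => hv (mem_mVerts.2 ⟨e, he, h'⟩)⟩
  refine ⟨⟨⟨?_, ?_⟩, ?_⟩, ?_⟩
  · intro e he
    rcases Finset.mem_insert.1 (Finset.mem_coe.1 he) with rfl | he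
    · exact huv
    · exact h.1.1 he
  · intro e he f hf hne w hw hw'
    rcases Finset.mem_insert.1 (Finset.mem_coe.1 he) with he1 | he1 <;>
    rcases Finset.mem_insert.1 (Finset.mem_coe.1 hf) with hf1 | hf1
    · exact hne (he1.trans hf1.symm)
    · rw [he1] at hw
      rcases Sym2.mem_iff.1 hw with hh | hh <;> rw [hh] at hw'
      · exact (hd f hf1).1 hw'
      · exact (hd f hf1).2 hw'
    · rw [hf1] at hw'
      rcases Sym2.mem_iff.1 hw' with hh | hh <;> rw [hh] at hw
      · exact (hd e he1).1 hw
      · exact (hd e he1).2 hw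
    · exact h.1.2 he1 hf1 hne w hw hw'
  · rw [Finset.card_insert_of_notMem, h.2]
    intro h'
    exact (hd _ h').1 (Sym2.mem_mk_left u v)
  · ext w
    simp only [mem_mVerts, Finset.mem_insert, exists_eq_or_imp, Sym2.mem_iff]
    tauto

/-- the complex of vertex sets containing no `k`-matching -/
def matchCx (G : SimpleGraph σ) (k : ℕ) : LowerSet (Finset σ) :=
  ⟨{F | ∀ M, IsKMatching G M k → ¬ mVerts M ⊆ F}, fun _ _ h hF M hM hs => hF M hM (hs.trans h)⟩

lemma matchPow_eq (K : Type*) [Field K] (G : SimpleGraph σ) (k : ℕ) :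
    matchPow K G k = srI K (matchCx G k) := by
  have hmon : ∀ M : Finset (Sym2 σ), matchMon K M =
      monomial (∑ v ∈ mVerts M, Finsupp.single v 1) (1 : K) := by
    intro M
    rw [matchMon, monomial_sum_one]
    rfl
  have hset : {u | ∃ M : Finset (Sym2 σ), IsKMatching G M k ∧ u = matchMon K M} =
      (fun d => monomial d (1 : K)) ''
        {d | ∃ M : Finset (Sym2 σ), IsKMatching G M k ∧ d = ∑ v ∈ mVerts M, Finsupp.single v 1} := by
    ext u
    constructor
    · rintro ⟨M, hM, rfl⟩
      exact ⟨_, ⟨M, hM, rfl⟩, (hmon M).symm⟩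
    · rintro ⟨_, ⟨M, hM, rfl⟩, rfl⟩
      exact ⟨M, hM, (hmon M).symm⟩
  have hle : ∀ (A : Finset σ) (d : σ →₀ ℕ),
      (∑ v ∈ A, Finsupp.single v 1 : σ →₀ ℕ) ≤ d ↔ A ⊆ d.support := by
    intro A d
    have happ : ∀ w, (∑ v ∈ A, Finsupp.single v 1 : σ →₀ ℕ) w = if w ∈ A then 1 else 0 := by
      intro w
      simp [Finsupp.finset_sum_apply, Finsupp.single_apply]
    constructor
    · intro h w hw
      have := h w
      rw [happ, if_pos hw] at this
      rw [Finsupp.mem_support_iff]; omega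
    · intro h w
      rw [happ]
      split_ifs with hw
      · have := Finsupp.mem_support_iff.1 (h hw); omega
      · exact Nat.zero_le _
  ext p
  rw [matchPow, hset, mem_ideal_span_monomial_image, mem_srI]
  constructor
  · intro h d hd
    by_contra hne
    obtain ⟨_, ⟨M, hM, rfl⟩, hs⟩ := h d (mem_support_iff.2 hne)
    exact hd M hM ((hle _ _).1 hs)
  · intro h d hd
    have h1 : d.support ∉ matchCx G k := fun h' => (mem_support_iff.1 hd) (h d h')
    have h2 : ∃ M, IsKMatching G M k ∧ mVerts M ⊆ d.support := by
      by_contra hcon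
      push Not at hcon
      exact h1 hcon
    obtain ⟨M, hM, hs⟩ := h2
    exact ⟨_, ⟨M, hM, rfl⟩, (hle _ _).2 hs⟩

end Graph

section Whisk
set_option linter.unusedSectionVars false
variable {s : ℕ} {a : Fin s → ℕ}

lemma wadj_ll {i j : Fin s} : (whiskered s a).Adj (Sum.inl i) (Sum.inl j) ↔ i ≠ j := by
  simp [whiskered, SimpleGraph.fromRel_adj]

lemma wadj_lr {i : Fin s} {p : Σ i : Fin s, Fin (a i)} :
    (whiskered s a).Adj (Sum.inl i) (Sum.inr p) ↔ p.1 = i := by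
  simp [whiskered, SimpleGraph.fromRel_adj]

lemma wadj_rr {p q : Σ i : Fin s, Fin (a i)} :
    ¬ (whiskered s a).Adj (Sum.inr p) (Sum.inr q) := by
  simp [whiskered, SimpleGraph.fromRel_adj]

lemma edge_whisk {e : Sym2 (WVert s a)} (he : e ∈ (whiskered s a).edgeSet)
    {p : Σ i : Fin s, Fin (a i)} (hp : Sum.inr p ∈ e) : e = s(Sum.inr p, Sum.inl p.1) := by
  obtain ⟨v, rfl⟩ := Sym2.mem_iff_exists.1 hp
  have h : (whiskered s a).Adj (Sum.inr p) v := he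
  rcases v with i | q
  · rw [wadj_lr.1 h.symm]
  · exact absurd h wadj_rr

lemma core_mem {M : Finset (Sym2 (WVert s a))} (hM : IsMatching (whiskered s a) M)
    {p : Σ i : Fin s, Fin (a i)} (hp : Sum.inr p ∈ mVerts M) :
    (Sum.inl p.1 : WVert s a) ∈ mVerts M := by
  obtain ⟨e, he, hpe⟩ := mem_mVerts.1 hp
  refine mem_mVerts.2 ⟨e, he, ?_⟩
  rw [edge_whisk (hM.1 he) hpe]
  exact Sym2.mem_mk_right _ _

lemma whisk_inj {M : Finset (Sym2 (WVert s a))} (hM : IsMatching (whiskered s a) M)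
    {p q : Σ i : Fin s, Fin (a i)} (hp : Sum.inr p ∈ mVerts M) (hq : Sum.inr q ∈ mVerts M)
    (h : p.1 = q.1) : p = q := by
  obtain ⟨e, he, hpe⟩ := mem_mVerts.1 hp
  obtain ⟨f, hf, hqf⟩ := mem_mVerts.1 hq
  have h1 := edge_whisk (hM.1 he) hpe
  have h2 := edge_whisk (hM.1 hf) hqf
  have hef : e = f := by
    by_contra hne
    refine hM.2 he hf hne (Sum.inl p.1) ?_ ?_
    · rw [h1]; exact Sym2.mem_mk_right _ _
    · rw [h2, h]; exact Sym2.mem_mk_right _ _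
  subst hef
  rw [h1] at hqf
  rcases Sym2.mem_iff.1 hqf with h' | h'
  · exact (Sum.inr_injective h').symm
  · exact absurd h' (by simp)

/-- the types of the whiskers in a set -/
def types (F : Finset (WVert s a)) : Finset (Fin s) :=
  Finset.univ.filter fun i => ∃ j, (Sum.inr ⟨i, j⟩ : WVert s a) ∈ F

lemma mem_types {F : Finset (WVert s a)} {i : Fin s} :
    i ∈ types F ↔ ∃ j, (Sum.inr ⟨i, j⟩ : WVert s a) ∈ F := by simp [types]

lemma types_mono {F F' : Finset (WVert s a)} (h : F ⊆ F') : types F ⊆ types F' := by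
  intro i hi
  rw [mem_types] at *
  obtain ⟨j, hj⟩ := hi
  exact ⟨j, h hj⟩

lemma types_card_le (F : Finset (WVert s a)) : (types F).card ≤ F.card := by
  classical
  have : types F ⊆ F.image (Sum.elim id Sigma.fst) := by
    intro i hi
    obtain ⟨j, hj⟩ := mem_types.1 hi
    exact Finset.mem_image.2 ⟨_, hj, rfl⟩
  exact (Finset.card_le_card this).trans Finset.card_image_le

lemma types_insert_inl (F : Finset (WVert s a)) (i : Fin s) :
    types (insert (Sum.inl i) F) = types F := by
  ext j; simp [mem_types]

lemma types_insert_inr (F : Finset (WVert s a)) (p : Σ i : Fin s, Fin (a i)) :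
    types (insert (Sum.inr p) F) = insert p.1 (types F) := by
  ext j
  simp only [mem_types, Finset.mem_insert, Sum.inr.injEq]
  constructor
  · rintro ⟨l, rfl | h⟩
    · exact Or.inl rfl
    · exact Or.inr ⟨l, h⟩
  · rintro (rfl | ⟨l, h⟩)
    · exact ⟨p.2, Or.inl rfl⟩
    · exact ⟨l, Or.inr h⟩

/-- the core vertices -/
def coreS (P : Finset (Fin s)) : Finset (WVert s a) := P.map ⟨Sum.inl, Sum.inl_injective⟩

lemma mem_coreS_inl {P : Finset (Fin s)} {i : Fin s} :
    (Sum.inl i : WVert s a) ∈ coreS P ↔ i ∈ P := by simp [coreS]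
lemma mem_coreS_inr {P : Finset (Fin s)} {p : Σ i : Fin s, Fin (a i)} :
    (Sum.inr p : WVert s a) ∉ coreS P := by simp [coreS]
lemma coreS_card (P : Finset (Fin s)) : (coreS P : Finset (WVert s a)).card = P.card := by
  simp [coreS]

lemma types_eq_empty {F : Finset (WVert s a)} : types F = ∅ ↔ F ⊆ coreS Finset.univ := by
  constructor
  · intro h v hv
    rcases v with i | ⟨i, j⟩
    · simp [mem_coreS_inl]
    · have : i ∈ types F := mem_types.2 ⟨j, hv⟩
      simp [h] at this
  · intro h
    rw [Finset.eq_empty_iff_forall_notMem]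
    intro i hi
    obtain ⟨j, hj⟩ := mem_types.1 hi
    exact mem_coreS_inr (h hj)

lemma card_le_types {M : Finset (Sym2 (WVert s a))} {k : ℕ}
    (hM : IsKMatching (whiskered s a) M k) : 2 * k ≤ s + (types (mVerts M)).card := by
  classical
  rw [← card_mVerts hM, ← Finset.card_filter_add_card_filter_not
    (s := mVerts M) (fun v : WVert s a => v.isLeft = true)]
  apply add_le_add
  · have : (mVerts M).filter (fun v : WVert s a => v.isLeft = true) ⊆ coreS Finset.univ := by
      intro v hv
      rcases v with i | p
      · simp [mem_coreS_inl]
      · simp at hv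
    refine (Finset.card_le_card this).trans ?_
    rw [coreS_card]; simp
  · refine Finset.card_le_card_of_injOn (Sum.elim id Sigma.fst) ?_ ?_
    · intro v hv
      rcases v with i | ⟨i, j⟩
      · simp at hv
      · simp only [Finset.coe_filter, Set.mem_setOf_eq] at hv
        exact Finset.mem_coe.2 (mem_types.2 ⟨j, hv.1⟩)
    · intro v hv w hw h
      rcases v with i | p <;> rcases w with i' | q
      · simp at hv
      · simp at hv
      · simp at hw
      · simp only [Finset.coe_filter, Set.mem_setOf_eq] at hv hw
        rw [whisk_inj hM.1 hv.1 hw.1 h]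

lemma exists_whisk_matching (F : Finset (WVert s a)) (T : Finset (Fin s)) :
    T ⊆ types F → ∃ M, IsKMatching (whiskered s a) M T.card ∧
      mVerts M ⊆ F ∪ coreS Finset.univ ∧ ∀ i, (Sum.inl i : WVert s a) ∈ mVerts M → i ∈ T := by
  induction T using Finset.induction_on with
  | empty =>
    intro _
    exact ⟨∅, isKMatching_empty, by simp [mVerts], by simp [mVerts]⟩
  | insert i T hi ih =>
    intro hT
    obtain ⟨M, hM, h1, h2⟩ := ih ((Finset.subset_insert _ _).trans hT)
    obtain ⟨j, hj⟩ := mem_types.1 (hT (Finset.mem_insert_self _ _))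
    have hu : (Sum.inl i : WVert s a) ∉ mVerts M := fun h => hi (h2 i h)
    have hv : (Sum.inr ⟨i, j⟩ : WVert s a) ∉ mVerts M := fun h => hu (core_mem hM.1 h)
    obtain ⟨h3, h4⟩ := hM.add (wadj_lr (p := ⟨i, j⟩).2 rfl) hu hv
    refine ⟨_, by rw [Finset.card_insert_of_notMem hi]; exact h3, ?_, ?_⟩
    · rw [h4]
      refine Finset.insert_subset ?_ (Finset.insert_subset ?_ h1)
      · exact Finset.mem_union_right _ (mem_coreS_inl.2 (Finset.mem_univ _))
      · exact Finset.mem_union_left _ hj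
    · intro l hl
      rw [h4] at hl
      simp only [Finset.mem_insert, Sum.inl.injEq, reduceCtorEq, false_or] at hl
      rcases hl with rfl | hl
      · exact Finset.mem_insert_self _ _
      · exact Finset.mem_insert_of_mem (h2 l hl)

lemma exists_core_matching {M : Finset (Sym2 (WVert s a))} {k : ℕ}
    (hM : IsKMatching (whiskered s a) M k) (n : ℕ) : ∀ C : Finset (Fin s), C.card = 2 * n →
    (∀ i ∈ C, (Sum.inl i : WVert s a) ∉ mVerts M) →
    ∃ M', IsKMatching (whiskered s a) M' (k + n) ∧ mVerts M' ⊆ mVerts M ∪ coreS C := by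
  induction n with
  | zero =>
    intro C _ _
    exact ⟨M, hM, Finset.subset_union_left⟩
  | succ n ih =>
    intro C hC hd
    obtain ⟨i, hi, j, hj, hij⟩ := Finset.one_lt_card.1 (show 1 < C.card by omega)
    obtain ⟨M', h1, h2⟩ := ih ((C.erase i).erase j) (by
      rw [Finset.card_erase_of_mem (Finset.mem_erase.2 ⟨hij.symm, hj⟩),
        Finset.card_erase_of_mem hi]; omega) (fun l hl => hd l (by simp at hl; exact hl.2.2))
    have hn : ∀ l ∈ C, l ∉ (C.erase i).erase j → (Sum.inl l : WVert s a) ∉ mVerts M' := by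
      intro l hl hl' h
      rcases Finset.mem_union.1 (h2 h) with h | h
      · exact hd l hl h
      · exact hl' (mem_coreS_inl.1 h)
    obtain ⟨h3, h4⟩ := h1.add (wadj_ll (a := a).2 hij) (hn i hi (by simp)) (hn j hj (by simp))
    refine ⟨_, h3, ?_⟩
    rw [h4]
    refine Finset.insert_subset ?_ (Finset.insert_subset ?_ (h2.trans ?_))
    · exact Finset.mem_union_right _ (mem_coreS_inl.2 hi)
    · exact Finset.mem_union_right _ (mem_coreS_inl.2 hj)
    · refine Finset.union_subset_union le_rfl ?_
      intro v hv
      rcases v with l | p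
      · rw [mem_coreS_inl] at *
        simp at hv
        exact hv.2.2
      · exact absurd hv mem_coreS_inr

lemma matching_iff {F : Finset (WVert s a)} {k : ℕ} (hk : k ≤ s) :
    (∃ M, IsKMatching (whiskered s a) M k ∧ mVerts M ⊆ F ∪ coreS Finset.univ) ↔
      2 * k - s ≤ (types F).card := by
  constructor
  · rintro ⟨M, hM, hs⟩
    have h1 := card_le_types hM
    have h2 : types (mVerts M) ⊆ types F := by
      intro i hi
      obtain ⟨j, hj⟩ := mem_types.1 hi
      rcases Finset.mem_union.1 (hs hj) with h | h
      · exact mem_types.2 ⟨j, h⟩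
      · exact absurd h mem_coreS_inr
    have := Finset.card_le_card h2
    omega
  · intro h
    obtain ⟨T, hT, hTc⟩ := Finset.exists_subset_card_eq h
    obtain ⟨M, hM, h1, h2⟩ := exists_whisk_matching F T hT
    have hc : 2 * (k - T.card) ≤ (Tᶜ).card := by
      rw [Finset.card_compl, Fintype.card_fin]; omega
    obtain ⟨C, hC, hCc⟩ := Finset.exists_subset_card_eq hc
    obtain ⟨M', h3, h4⟩ := exists_core_matching hM (k - T.card) C hCc
      (fun i hi h => Finset.mem_compl.1 (hC hi) (h2 i h))
    refine ⟨M', by rwa [show T.card + (k - T.card) = k by omega] at h3, h4.trans ?_⟩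
    refine Finset.union_subset h1 (Finset.Subset.trans ?_ Finset.subset_union_right)
    intro v hv
    rcases v with l | p
    · simp [mem_coreS_inl]
    · exact absurd hv mem_coreS_inr

lemma matchNum_whisk (ha : ∀ i, 1 ≤ a i) : matchNum (whiskered s a) = s := by
  have hmem : s ∈ {k | ∃ M : Finset (Sym2 (WVert s a)), IsKMatching (whiskered s a) M k} := by
    obtain ⟨M, hM, _⟩ := (matching_iff (F := (Finset.univ : Finset (WVert s a))) le_rfl).2 (by
      have : types (Finset.univ : Finset (WVert s a)) = Finset.univ := by
        ext i
        simp only [mem_types, Finset.mem_univ, iff_true]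
        exact ⟨⟨0, ha i⟩, trivial⟩
      rw [this, Finset.card_univ, Fintype.card_fin]; omega)
    exact ⟨M, hM⟩
  have hub : ∀ k ∈ {k | ∃ M : Finset (Sym2 (WVert s a)), IsKMatching (whiskered s a) M k},
      k ≤ s := by
    rintro k ⟨M, hM⟩
    have h1 := card_le_types hM
    have h2 := Finset.card_le_univ (types (mVerts M))
    rw [Fintype.card_fin] at h2
    omega
  exact IsGreatest.csSup_eq ⟨hmem, hub⟩

lemma cochordal_whisk : IsChordal (whiskered s a)ᶜ := by
  rintro m hm ⟨f, hf, hadj⟩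
  have hII : ∀ i j : ZMod m, (f i).isLeft = true → (f j).isLeft = true →
      ¬ (whiskered s a)ᶜ.Adj (f i) (f j) := by
    intro i j hi hj h
    obtain ⟨x, hx⟩ := Sum.isLeft_iff.1 hi
    obtain ⟨y, hy⟩ := Sum.isLeft_iff.1 hj
    rw [hx, hy, SimpleGraph.compl_adj] at h
    exact h.2 (wadj_ll.2 (fun h' => h.1 (by rw [h'])))
  have hWW : ∀ i j : ZMod m, i ≠ j → ¬ (f i).isLeft = true → ¬ (f j).isLeft = true →
      (whiskered s a)ᶜ.Adj (f i) (f j) := by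
    intro i j hij hi hj
    have hne : f i ≠ f j := fun h => hij (hf h)
    rw [SimpleGraph.compl_adj]
    refine ⟨hne, ?_⟩
    rcases h1 : f i with x | p
    · simp [h1] at hi
    · rcases h2 : f j with y | q
      · simp [h2] at hj
      · exact wadj_rr
  have hz : ∀ n : ℕ, 0 < n → n < m → (n : ZMod m) ≠ 0 := by
    intro n h1 h2 h
    rw [ZMod.natCast_eq_zero_iff] at h
    exact absurd (Nat.le_of_dvd h1 h) (by omega)
  have h1 := hz 1 (by omega) (by omega)
  have h2 := hz 2 (by omega) (by omega)
  have h3 := hz 3 (by omega) (by omega)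
  push_cast at h1 h2 h3
  have A1 : ∀ i : ZMod m, (f i).isLeft = true → ¬ (f (i + 1)).isLeft = true := fun i hi hj =>
    hII i (i + 1) hi hj ((hadj _ _).2 (Or.inr rfl))
  have A2 : ∀ i : ZMod m, ¬ (f i).isLeft = true → (f (i + 2)).isLeft = true := by
    intro i hi
    by_contra hj
    have hij : i ≠ i + 2 := fun h => h2 (by linear_combination -h)
    rcases (hadj _ _).1 (hWW i (i + 2) hij hi hj) with h | h
    · exact h3 (by linear_combination -h)
    · exact h1 (by linear_combination h)
  have key : ∀ i : ZMod m, ¬ (f i).isLeft = true := by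
    intro i hi
    have b1 := A1 i hi
    have b3 := A2 _ b1
    have b2 : ¬ (f (i + 2)).isLeft = true := fun h => by
      have := A1 _ h
      rw [show i + 2 + 1 = i + 1 + 2 by ring] at this
      exact this b3
    have b4 := A2 _ b2
    have b5 := A1 _ b3
    rw [show i + 1 + 2 + 1 = i + 2 + 2 by ring] at b5
    exact b5 b4
  exact key _ (A2 0 (key 0))

end Whisk

section Final
universe u
variable {K : Type u} [Field K] {s : ℕ} {a : Fin s → ℕ}

/-- first whisker at a vertex -/
def wh (ha : ∀ i, 1 ≤ a i) (i : Fin s) : WVert s a := Sum.inr ⟨i, ⟨0, ha i⟩⟩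

lemma Dc_types (ha : ∀ i, 1 ≤ a i) (T T0 : Finset (Fin s)) (A : Finset (WVert s a))
    {Δ : LowerSet (Finset (WVert s a))} {r : ℕ}
    (hfree : ∀ F ∈ Δ, ∀ x ∈ A, insert x F ∈ Δ) (hF : ∀ F ∈ Δ, types F ⊆ T)
    (h2 : ∀ F, types F ⊆ T → F.card ≤ r → F ∈ Δ) (hT : T0 ⊆ T)
    (hA : ∀ i ∈ T0, wh ha i ∉ A) (hr : r ≤ T0.card) : Dc K Δ (A.card + r) := by
  classical
  refine Dc_free_gen A ((Finset.univ.filter fun v => types {v} ⊆ T) \ A) hfree ?_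
    Finset.sdiff_disjoint ?_ ?_
  · intro F hFΔ hd v hv
    rw [Finset.mem_sdiff, Finset.mem_filter]
    refine ⟨⟨Finset.mem_univ _, (types_mono (Finset.singleton_subset_iff.2 hv)).trans (hF F hFΔ)⟩, ?_⟩
    exact Finset.disjoint_left.1 hd hv
  · intro F hFC hc
    refine h2 F ?_ hc
    intro i hi
    obtain ⟨j, hj⟩ := mem_types.1 hi
    have := hFC hj
    rw [Finset.mem_sdiff, Finset.mem_filter] at this
    exact this.1.2 (mem_types.2 ⟨j, Finset.mem_singleton_self _⟩)
  · refine hr.trans (le_trans (Finset.card_le_card ?_) (types_card_le _))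
    intro i hi
    refine mem_types.2 ⟨⟨0, ha i⟩, ?_⟩
    rw [Finset.mem_sdiff, Finset.mem_filter]
    refine ⟨⟨Finset.mem_univ _, ?_⟩, hA i hi⟩
    intro j hj
    obtain ⟨l, hl⟩ := mem_types.1 hj
    have := Sum.inr_injective (Finset.mem_singleton.1 hl)
    rw [Sigma.mk.injEq] at this
    rw [this.1]
    exact hT hi

/-- sets of whiskers with few types -/
def Gam (a : Fin s → ℕ) (T : Finset (Fin s)) (t : ℕ) : LowerSet (Finset (WVert s a)) :=
  ⟨{F | types F ⊆ T ∧ (types F).card < t}, fun _ _ h hF =>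
    ⟨(types_mono h).trans hF.1, (Finset.card_le_card (types_mono h)).trans_lt hF.2⟩⟩

/-- auxiliary complex -/
def Gam1 (a : Fin s → ℕ) (T : Finset (Fin s)) (n : Fin s) (t : ℕ) :
    LowerSet (Finset (WVert s a)) :=
  ⟨{F | types F ⊆ T ∧ ((types F).erase n).card < t}, fun _ _ h hF =>
    ⟨(types_mono h).trans hF.1,
      (Finset.card_le_card (Finset.erase_subset_erase _ (types_mono h))).trans_lt hF.2⟩⟩

lemma mem_Gam {T : Finset (Fin s)} {t : ℕ} {F : Finset (WVert s a)} :
    F ∈ Gam a T t ↔ types F ⊆ T ∧ (types F).card < t := Iff.rfl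

lemma mem_Gam1 {T : Finset (Fin s)} {n : Fin s} {t : ℕ} {F : Finset (WVert s a)} :
    F ∈ Gam1 a T n t ↔ types F ⊆ T ∧ ((types F).erase n).card < t := Iff.rfl

lemma core_insert {F : Finset (WVert s a)} {P : Finset (Fin s)} {x : WVert s a}
    (hx : x ∈ coreS P) : types (insert x F) = types F := by
  rcases x with i | p
  · exact types_insert_inl F i
  · exact absurd hx mem_coreS_inr

lemma not_Zc_Gam (ha : ∀ i, 1 ≤ a i) (u : ℕ) : ∀ T : Finset (Fin s), u + 1 ≤ T.card →
    ¬ Zc K (Gam a T (u + 1)) (s + u) := by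
  induction u with
  | zero =>
    intro T hT
    have h1 : Gam a T (0 + 1) = LowerSet.Iic (coreS Finset.univ) := by
      ext F
      rw [SetLike.mem_coe, SetLike.mem_coe, mem_Gam, LowerSet.mem_Iic_iff, Finset.le_iff_subset,
        ← types_eq_empty, Nat.lt_one_iff, Finset.card_eq_zero]
      exact ⟨fun h => h.2, fun h => ⟨by rw [h]; exact Finset.empty_subset _, h⟩⟩
    have h2 := not_Zc_simplex (K := K) (coreS (a := a) Finset.univ)
    rw [coreS_card, Finset.card_univ, Fintype.card_fin] at h2
    rw [h1]
    exact h2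
  | succ u ih =>
    intro T hT hZ
    obtain ⟨n, hn⟩ := Finset.card_pos.1 (show 0 < T.card by omega)
    have hcard : (T.erase n).card = T.card - 1 := Finset.card_erase_of_mem hn
    have hcore : (coreS (a := a) Finset.univ).card = s := by
      rw [coreS_card, Finset.card_univ, Fintype.card_fin]
    have hins : (insert (wh ha n) (coreS (a := a) Finset.univ)).card = s + 1 := by
      rw [wh, Finset.card_insert_of_notMem mem_coreS_inr, hcore]
    have hD1 : Dc K (Gam1 a T n (u + 1)) (s + 1 + u) := by
      rw [← hins]
      refine Dc_types ha T (T.erase n) _ ?_ (fun F hF => hF.1) ?_ (Finset.erase_subset _ _) ?_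
        (by omega)
      · intro F hF x hx
        rw [mem_Gam1] at hF ⊢
        rcases Finset.mem_insert.1 hx with rfl | hx
        · rw [wh, types_insert_inr]
          exact ⟨Finset.insert_subset hn hF.1, by
            rw [Finset.erase_insert_eq_erase]; exact hF.2⟩
        · rwa [core_insert hx]
      · intro F hF hc
        refine ⟨hF, ?_⟩
        have h1 := Finset.card_le_card (Finset.erase_subset n (types F))
        have h2 := types_card_le F
        omega
      · intro i hi h
        rcases Finset.mem_insert.1 h with h | h
        · have := Sum.inr_injective h
          rw [Sigma.mk.injEq] at this
          exact (Finset.mem_erase.1 hi).1 this.1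
        · exact mem_coreS_inr h
    have hD2 : Dc K (Gam a (T.erase n) (u + 2)) (s + (u + 1)) := by
      have := Dc_types (K := K) ha (T.erase n) (T.erase n) (coreS Finset.univ)
        (Δ := Gam a (T.erase n) (u + 2)) (r := u + 1)
        (fun F hF x hx => by rw [mem_Gam] at hF ⊢; rwa [core_insert hx]) (fun F hF => hF.1)
        (fun F hF hc => ⟨hF, by have := types_card_le F; omega⟩) le_rfl
        (fun i _ => mem_coreS_inr) (by omega)
      rwa [hcore] at this
    have hsup : Gam1 a T n (u + 1) ⊔ Gam a (T.erase n) (u + 2) = Gam a T (u + 1 + 1) := by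
      ext F
      simp only [SetLike.mem_coe, LowerSet.mem_sup_iff, mem_Gam, mem_Gam1]
      by_cases hnF : n ∈ types F
      · have hc := Finset.card_erase_add_one hnF
        constructor
        · rintro (h | h)
          · exact ⟨h.1, by omega⟩
          · exact ⟨h.1.trans (Finset.erase_subset _ _), h.2⟩
        · intro h
          exact Or.inl ⟨h.1, by omega⟩
      · constructor
        · rintro (h | h)
          · rw [Finset.erase_eq_of_notMem hnF] at h
            exact ⟨h.1, by omega⟩
          · exact ⟨h.1.trans (Finset.erase_subset _ _), h.2⟩
        · intro h
          refine Or.inr ⟨?_, h.2⟩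
          exact fun i hi => Finset.mem_erase.2 ⟨fun h' => hnF (h' ▸ hi), h.1 hi⟩
    have hinf : Gam1 a T n (u + 1) ⊓ Gam a (T.erase n) (u + 2) = Gam a (T.erase n) (u + 1) := by
      ext F
      simp only [SetLike.mem_coe, LowerSet.mem_inf_iff, mem_Gam, mem_Gam1]
      constructor
      · rintro ⟨h1, h2⟩
        have hnF : n ∉ types F := fun h => (Finset.mem_erase.1 (h2.1 h)).1 rfl
        rw [Finset.erase_eq_of_notMem hnF] at h1
        exact ⟨h2.1, h1.2⟩
      · intro h
        refine ⟨⟨h.1.trans (Finset.erase_subset _ _), ?_⟩, h.1, by omega⟩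
        exact (Finset.card_le_card (Finset.erase_subset _ _)).trans_lt h.2
    refine ih (T.erase n) (by omega) ?_
    rw [← hinf]
    refine Zc_mv (hD1 _ (by omega)) (hD2 _ (by omega)) ?_
    rw [hsup]
    exact hZ

/-- iterated links along core vertices -/
def chain (a : Fin s → ℕ) (k : ℕ) (P : Finset (Fin s)) : LowerSet (Finset (WVert s a)) :=
  ⟨{F | F ∪ coreS P ∈ matchCx (whiskered s a) k}, fun _ _ h hF =>
    (matchCx (whiskered s a) k).lower (Finset.union_subset_union h le_rfl) hF⟩

lemma mem_chain {k : ℕ} {P : Finset (Fin s)} {F : Finset (WVert s a)} :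
    F ∈ chain a k P ↔ ∀ M, IsKMatching (whiskered s a) M k → ¬ mVerts M ⊆ F ∪ coreS P := Iff.rfl

lemma coreS_insert (x : Fin s) (P : Finset (Fin s)) :
    (coreS (insert x P) : Finset (WVert s a)) = insert (Sum.inl x) (coreS P) := by
  simp [coreS]

lemma lk_chain (k : ℕ) (P : Finset (Fin s)) (x : Fin s) :
    lk (Sum.inl x) (chain a k P) = chain a k (insert x P) := by
  ext F
  rw [SetLike.mem_coe, SetLike.mem_coe, mem_lk, mem_chain, mem_chain, coreS_insert,
    Finset.insert_union, Finset.union_insert]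

lemma card_WVert (ha : ∀ i, 1 ≤ a i) : 2 * s ≤ (Finset.univ : Finset (WVert s a)).card := by
  rw [Finset.card_univ, Fintype.card_sum, Fintype.card_sigma, Fintype.card_fin]
  have : ∑ i : Fin s, 1 ≤ ∑ i : Fin s, Fintype.card (Fin (a i)) :=
    Finset.sum_le_sum fun i _ => by rw [Fintype.card_fin]; exact ha i
  rw [Finset.sum_const, Finset.card_univ, Fintype.card_fin, smul_eq_mul] at this
  omega

lemma Dc_del_chain (ha : ∀ i, 1 ≤ a i) {k q : ℕ} (P : Finset (Fin s)) (x : Fin s) (hx : x ∉ P)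
    (hq : q ≤ 2 * k) (hq2 : q + 1 ≤ 2 * s) : Dc K (del (Sum.inl x) (chain a k P)) q := by
  classical
  have hA : (insert (wh ha x) (coreS P : Finset (WVert s a))).card = P.card + 1 := by
    rw [wh, Finset.card_insert_of_notMem mem_coreS_inr, coreS_card]
  have hfree : ∀ F ∈ del (Sum.inl x) (chain a k P), ∀ v ∈ insert (wh ha x) (coreS P),
      insert v F ∈ del (Sum.inl x) (chain a k P) := by
    intro F hF v hv
    rw [mem_del, mem_chain] at hF ⊢
    have hxc : (Sum.inl x : WVert s a) ∉ coreS P := fun h => hx (mem_coreS_inl.1 h)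
    rcases Finset.mem_insert.1 hv with rfl | hv
    · refine ⟨?_, ?_⟩
      · intro M hM hs
        have hxM : (Sum.inl x : WVert s a) ∉ mVerts M := by
          intro h
          have := hs h
          rw [Finset.mem_union, Finset.mem_insert] at this
          rcases this with (h' | h') | h'
          · exact absurd h' (by simp [wh])
          · exact hF.2 h'
          · exact hxc h'
        refine hF.1 M hM ?_
        intro v hv
        have := hs hv
        rw [Finset.insert_union, Finset.mem_insert] at this
        rcases this with rfl | h
        · exact absurd (core_mem hM.1 hv) hxM
        · exact h
      · rw [Finset.mem_insert, not_or]
        exact ⟨by simp [wh], hF.2⟩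
    · refine ⟨?_, ?_⟩
      · rw [Finset.insert_union, Finset.insert_eq_of_mem (Finset.mem_union_right _ hv)]
        exact hF.1
      · rw [Finset.mem_insert, not_or]
        exact ⟨fun h => hxc (h ▸ hv), hF.2⟩
  by_cases hqP : q ≤ P.card + 1
  · have := Dc_free (K := K) (r := 0) (insert (wh ha x) (coreS P)) hfree
      (fun i hi => absurd hi (Nat.not_lt_zero _))
    rw [hA] at this
    exact this.mono (by omega)
  · have := Dc_free_gen (K := K) (insert (wh ha x) (coreS P))
      (Finset.univ \ insert (Sum.inl x) (insert (wh ha x) (coreS P)))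
      (Δ := del (Sum.inl x) (chain a k P)) (r := q - P.card - 1) hfree ?_ ?_ ?_ ?_
    · rw [hA] at this
      exact this.mono (by omega)
    · intro F hF hd v hv
      rw [Finset.mem_sdiff, Finset.mem_insert, not_or]
      refine ⟨Finset.mem_univ _, ?_, Finset.disjoint_left.1 hd hv⟩
      rintro rfl
      exact hF.2 hv
    · refine Finset.disjoint_left.2 fun v hv hv' => ?_
      exact (Finset.mem_sdiff.1 hv).2 (Finset.mem_insert_of_mem hv')
    · intro F hF hc
      refine ⟨?_, fun h => (Finset.mem_sdiff.1 (hF h)).2 (Finset.mem_insert_self _ _)⟩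
      rw [mem_chain]
      intro M hM hs
      have h1 := Finset.card_le_card hs
      have h2 := Finset.card_union_le F (coreS P)
      rw [card_mVerts hM] at h1
      rw [coreS_card] at h2
      omega
    · have h1 := Finset.le_card_sdiff (insert (Sum.inl x) (insert (wh ha x) (coreS P)))
        (Finset.univ : Finset (WVert s a))
      have h2 := Finset.card_insert_le (Sum.inl x) (insert (wh ha x) (coreS (a := a) P))
      have h3 := card_WVert ha
      rw [hA] at h2
      omega

lemma chain_empty (k : ℕ) : chain a k ∅ = matchCx (whiskered s a) k := by
  ext F
  rw [SetLike.mem_coe, SetLike.mem_coe, mem_chain]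
  simp [coreS]
  rfl

lemma chain_univ {k : ℕ} (hk : k ≤ s) : chain a k Finset.univ = Gam a Finset.univ (2 * k - s) := by
  ext F
  rw [SetLike.mem_coe, SetLike.mem_coe, mem_chain, mem_Gam, ← not_le, ← matching_iff hk]
  push Not
  exact ⟨fun h => ⟨Finset.subset_univ _, h⟩, fun h => h.2⟩

lemma Dc_chain (ha : ∀ i, 1 ≤ a i) {k : ℕ} (hk : 2 * k + 1 ≤ 2 * s) (P : Finset (Fin s)) :
    Dc K (chain a k P) (2 * k) → Dc K (chain a k ∅) (2 * k) := by
  induction P using Finset.induction_on with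
  | empty => exact id
  | insert x P hx ih =>
    intro h
    refine ih (Dc_of_lk_del (Sum.inl x) ?_ (Dc_del_chain ha P x hx le_rfl hk))
    rw [lk_chain]
    exact h

lemma Zc_chain (ha : ∀ i, 1 ≤ a i) {k : ℕ} (hk1 : 1 ≤ k) (hk : k ≤ s) (P : Finset (Fin s)) :
    Zc K (chain a k ∅) (2 * k - 1) → Zc K (chain a k P) (2 * k - 1) := by
  induction P using Finset.induction_on with
  | empty => exact id
  | insert x P hx ih =>
    intro h
    have h1 := ih h
    rw [← lk_chain]
    rw [show 2 * k - 1 = (2 * k - 2) + 1 by omega] at h1 ⊢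
    exact Zc_lk (Sum.inl x)
      (Dc_del_chain ha P x hx (q := 2 * k - 1) (by omega) (by omega) _ (by omega)) h1

lemma qdepth_iff (ha : ∀ i, 1 ≤ a i) {k : ℕ} (hk1 : 1 ≤ k) (hk : k ≤ s) :
    qdepth K (matchPow K (whiskered s a) k) = 2 * k - 1 ↔ s / 2 + 1 ≤ k ∧ k ≤ s := by
  have h0 : ∅ ∈ matchCx (whiskered s a) k := by
    intro M hM hs
    have h1 := Finset.card_le_card hs
    rw [card_mVerts hM, Finset.card_empty] at h1
    omega
  have hrees := fun n => rees (srI K (matchCx (whiskered s a) k)) (srI_le_mI h0) (mI_ne_top) n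
  rw [matchPow_eq]
  constructor
  · intro h
    refine ⟨?_, hk⟩
    by_contra hlt
    have hD : Dc K (matchCx (whiskered s a) k) (2 * k) := by
      rw [← chain_empty]
      refine Dc_chain ha (by omega) Finset.univ (Dc_bot ?_ _)
      rw [chain_univ hk, mem_Gam]
      intro h
      omega
    have hmem := (hrees (2 * k)).1 hD
    unfold qdepth at h
    by_cases hb : BddAbove {m | ∃ l : List (MvPolynomial (WVert s a) K), l.length = m ∧
      (∀ f ∈ l, f ∈ Ideal.span (Set.range (X : WVert s a → MvPolynomial (WVert s a) K))) ∧
      RingTheory.Sequence.IsRegular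
        (MvPolynomial (WVert s a) K ⧸ srI K (matchCx (whiskered s a) k)) l}
    · have := le_csSup hb hmem
      omega
    · rw [Nat.sSup_of_not_bddAbove hb] at h
      omega
  · rintro ⟨h1, -⟩
    have hN : ¬ Zc K (matchCx (whiskered s a) k) (2 * k - 1) := by
      intro hZ
      rw [← chain_empty] at hZ
      have h2 := Zc_chain ha hk1 hk Finset.univ hZ
      rw [chain_univ hk] at h2
      refine not_Zc_Gam ha (2 * k - s - 1) Finset.univ ?_ ?_ (K := K)
      · rw [Finset.card_univ, Fintype.card_fin]; omega
      · rwa [show 2 * k - s - 1 + 1 = 2 * k - s by omega,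
          show s + (2 * k - s - 1) = 2 * k - 1 by omega]
    have hD : Dc K (matchCx (whiskered s a) k) (2 * k - 1) := by
      refine Dc_gen Finset.univ (fun F _ => Finset.subset_univ _) ?_ ?_
      · intro F _ hc M hM hs
        have h1 := Finset.card_le_card hs
        rw [card_mVerts hM] at h1
        omega
      · have := card_WVert ha
        omega
    refine IsGreatest.csSup_eq ⟨(hrees _).1 hD, ?_⟩
    intro n hn
    by_contra hlt
    exact hN ((hrees n).2 hn _ (by omega))

end Final

/-- Let `G = H(a_1, …, a_s)` with `s ≥ 2` and `a_i ≥ 1` for all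
`i`. Then (a) `ν(G) = s`; (b) `G` is cochordal; and (c) for `1 ≤ k ≤ s`,
`depth(S/I(G)^{[k]}) = 2k − 1` if and only if `⌊s/2⌋ + 1 ≤ k ≤ s`. -/
theorem whiskered_min_depth_iff {K : Type*} [Field K]
    (s : ℕ) (hs : 2 ≤ s) (a : Fin s → ℕ) (ha : ∀ i, 1 ≤ a i) :
    matchNum (whiskered s a) = s ∧
    IsChordal (whiskered s a)ᶜ ∧
    ∀ k : ℕ, 1 ≤ k → k ≤ s →
      (qdepth K (matchPow K (whiskered s a) k) = 2 * k - 1 ↔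
        s / 2 + 1 ≤ k ∧ k ≤ s) := by
  exact ⟨matchNum_whisk ha, cochordal_whisk, fun k hk1 hk => qdepth_iff ha hk1 hk⟩
end

section
/- Let n ≥ 4, let P_n be the path graph on [n] with edges {i, i+1} for i = 1,…,n−1, let G = P_n^c be its complement, and let I = I(G) ⊂ S = K[x_1,…,x_n]. Then depth(S/I) = 2, and for every k with 2 ≤ k ≤ ν(G) one has I^{[k]} = 𝔪^{[2k]}, where 𝔪 = (x_1,…,x_n) and 𝔪^{[2k]} is the ideal generated by all squarefree monomials of degree 2k; consequently depth(S/I^{[k]}) = 2k − 1 for 2 ≤ k ≤ ν(G). -/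
open MvPolynomial

set_option linter.unusedSectionVars false

open RingTheory.Sequence in
theorem wreg_ext {R : Type*} [CommRing R] (rs : List R) :
    ∀ {M M' M'' : Type _} [AddCommGroup M] [AddCommGroup M'] [AddCommGroup M'']
    [Module R M] [Module R M'] [Module R M''] (f : M →ₗ[R] M') (g : M' →ₗ[R] M''),
    Function.Injective f → Function.Exact f g → Function.Surjective g →
    IsWeaklyRegular M rs → IsWeaklyRegular M'' rs → IsWeaklyRegular M' rs := by
  induction rs with
  | nil => intros; exact IsWeaklyRegular.nil _ _
  | cons r rs ih =>
    intro M M' M'' _ _ _ _ _ _ f g hf hfg hg h1 h2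
    rw [isWeaklyRegular_cons_iff] at h1 h2 ⊢
    refine ⟨isSMulRegular_of_range_eq_ker (g := g) hf ?_ h1.1 h2.1, ?_⟩
    · exact (LinearMap.exact_iff.mp hfg).symm
    · refine ih (QuotSMulTop.map r f) (QuotSMulTop.map r g) ?_ (QuotSMulTop.map_exact r hfg hg)
        (QuotSMulTop.map_surjective r hg) h1.2 h2.2
      have h0 : Function.Exact (0 : M →ₗ[R] M) f := by
        rw [LinearMap.exact_iff, LinearMap.range_zero]
        exact LinearMap.ker_eq_bot.mpr hf
      have := QuotSMulTop.map_first_exact_on_four_term_exact_of_isSMulRegular_last h0 hfg h2.1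
      rw [LinearMap.exact_iff] at this
      rw [← LinearMap.ker_eq_bot, this]
      simp

open RingTheory.Sequence in
theorem wreg_length_le {R : Type*} [CommRing R] [IsNoetherianRing R] (rs : List R) :
    ∀ {M : Type _} [AddCommGroup M] [Module R M] [Module.Finite R M],
    IsRegular M rs → (rs.length : WithBot ℕ∞) ≤ Module.supportDim R M := by
  induction rs with
  | nil =>
    intro M _ _ _ h
    have := h.nontrivial
    have h2 := Module.supportDim_ne_bot_of_nontrivial R M
    simp only [List.length_nil, Nat.cast_zero]
    cases hd : Module.supportDim R M with
    | bot => exact absurd hd h2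
    | coe a => exact_mod_cast zero_le
  | cons r rs ih =>
    intro M _ _ _ h
    rw [isRegular_cons_iff] at h
    have h1 := ih h.2
    have h2 := Module.supportDim_quotSMulTop_succ_le_of_notMem_minimalPrimes (R := R) (M := M) (x := r)
      (fun _ ↦ h.1.notMem_of_mem_minimalPrimes)
    refine le_trans ?_ h2
    simp only [List.length_cons, Nat.cast_add, Nat.cast_one]
    gcongr

section SR
variable {K : Type*} [Field K] {σ : Type*} [Fintype σ] [DecidableEq σ]

/-- Stanley–Reisner ideal. -/
noncomputable def srIdeal (K : Type*) [Field K] {σ : Type*} (D : Finset σ → Prop) :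
    Ideal (MvPolynomial σ K) :=
  Ideal.span ((fun s => monomial s (1 : K)) '' {m | ¬ D m.support})

def DownC {σ : Type*} (D : Finset σ → Prop) : Prop := ∀ s t : Finset σ, s ⊆ t → D t → D s

theorem mem_sr {D : Finset σ → Prop} (hD : DownC D) (f : MvPolynomial σ K) :
    f ∈ srIdeal K D ↔ ∀ m ∈ f.support, ¬ D m.support := by
  rw [srIdeal, mem_ideal_span_monomial_image]
  constructor
  · intro h m hm hDm
    obtain ⟨s, hs, hsm⟩ := h m hm
    exact hs (hD _ _ (Finsupp.support_mono hsm) hDm)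
  · intro h m hm
    exact ⟨m, h m hm, le_rfl⟩

theorem mul_mon_mem_sr {D : Finset σ → Prop} (hD : DownC D) (f : MvPolynomial σ K) (s : σ →₀ ℕ) :
    f * monomial s 1 ∈ srIdeal K D ↔ ∀ m ∈ f.support, ¬ D (m.support ∪ s.support) := by
  rw [mem_sr hD]
  have key : ∀ m : σ →₀ ℕ, (m + s).support = m.support ∪ s.support := by
    intro m; ext i; simp only [Finsupp.mem_support_iff, Finsupp.add_apply, Finset.mem_union]; omega
  constructor
  · intro h m hm
    rw [← key]
    apply h
    rw [mem_support_iff] at hm ⊢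
    rw [coeff_mul_monomial, mul_one]
    exact hm
  · intro h m hm
    rw [mem_support_iff, coeff_mul_monomial'] at hm
    split_ifs at hm with hsm
    · have := h (m - s) (by rw [mem_support_iff]; simpa using hm)
      rw [← key, tsub_add_cancel_of_le hsm] at this
      exact this
    · exact absurd rfl hm

theorem prodX_eq (B : Finset σ) : (∏ i ∈ B, X i : MvPolynomial σ K) =
    monomial (∑ i ∈ B, Finsupp.single i 1) 1 := by
  rw [monomial_sum_one]; rfl

theorem prodX_supp (B : Finset σ) : (∑ i ∈ B, Finsupp.single i 1 : σ →₀ ℕ).support = B := by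
  ext i
  simp [Finsupp.finsetSum_apply, Finsupp.single_apply]

theorem prodX_mem {D : Finset σ → Prop} (hD : DownC D) (B : Finset σ) :
    (∏ i ∈ B, X i : MvPolynomial σ K) ∈ srIdeal K D ↔ ¬ D B := by
  have := mul_mon_mem_sr (K := K) hD 1 (∑ i ∈ B, Finsupp.single i 1)
  rw [one_mul, ← prodX_eq, prodX_supp] at this
  rw [this]
  constructor
  · intro h
    have := h 0 (by simp [mem_support_iff])
    simpa using this
  · intro h m _ hm
    exact h (hD _ _ Finset.subset_union_right hm)

/-- the sequence e_r, ..., e_1 -/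
noncomputable def eseq (K : Type*) [Field K] (σ : Type*) [Fintype σ] :
    ℕ → List (MvPolynomial σ K)
  | 0 => []
  | (r+1) => esymm σ K (r+1) :: eseq K σ r

open RingTheory.Sequence in
def WR (K : Type*) [Field K] {σ : Type*} [Fintype σ] (D : Finset σ → Prop) (r : ℕ) : Prop :=
  IsWeaklyRegular (MvPolynomial σ K ⧸ srIdeal K D) (eseq K σ r)

theorem WR.ext {D D1 D2 : Finset σ → Prop} {r : ℕ} (hD : DownC D) (h1d : DownC D1)
    (h2d : DownC D2) (j : σ)
    (e1 : ∀ s, D1 s ↔ D (insert j s)) (e2 : ∀ s, D2 s ↔ j ∉ s ∧ D s)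
    (h1 : WR K D1 r) (h2 : WR K D2 r) : WR K D r := by
  have hX : (X j : MvPolynomial σ K) = monomial (Finsupp.single j 1) 1 := rfl
  have hs : (Finsupp.single j 1 : σ →₀ ℕ).support = {j} := by
    simp
  have hcol : ∀ f : MvPolynomial σ K, f * X j ∈ srIdeal K D ↔ f ∈ srIdeal K D1 := by
    intro f
    rw [hX, mul_mon_mem_sr hD, mem_sr h1d, hs]
    simp only [e1, Finset.insert_eq, Finset.union_comm]
  have hle : srIdeal K D ≤ srIdeal K D2 := by
    intro f hf
    rw [mem_sr hD] at hf
    rw [mem_sr h2d]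
    intro m hm h
    exact hf m hm ((e2 _).1 h).2
  let f0 : MvPolynomial σ K →ₗ[MvPolynomial σ K] MvPolynomial σ K :=
    LinearMap.mulRight _ (X j)
  let f : (MvPolynomial σ K ⧸ srIdeal K D1) →ₗ[MvPolynomial σ K] (MvPolynomial σ K ⧸ srIdeal K D) :=
    Submodule.mapQ _ _ f0 (fun x hx => (hcol x).2 hx)
  let g : (MvPolynomial σ K ⧸ srIdeal K D) →ₗ[MvPolynomial σ K] (MvPolynomial σ K ⧸ srIdeal K D2) :=
    Submodule.factor hle
  refine wreg_ext _ f g ?_ ?_ ?_ h1 h2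
  · rw [← LinearMap.ker_eq_bot, LinearMap.ker_eq_bot']
    intro x hx
    obtain ⟨x, rfl⟩ := Submodule.mkQ_surjective _ x
    have : f0 x ∈ srIdeal K D := (Submodule.Quotient.mk_eq_zero _).1 hx
    exact (Submodule.Quotient.mk_eq_zero _).2 ((hcol x).1 this)
  · intro x
    obtain ⟨x, rfl⟩ := Submodule.mkQ_surjective _ x
    constructor
    · intro hx
      have hx : x ∈ srIdeal K D2 := (Submodule.Quotient.mk_eq_zero _).1 hx
      rw [mem_sr h2d] at hx
      -- split x = a * X j + b
      obtain ⟨q, b, hqb, hb⟩ : ∃ q b : MvPolynomial σ K, x = q * X j + b ∧ b ∈ srIdeal K D := by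
        refine ⟨x.divMonomial (Finsupp.single j 1), x.modMonomial (Finsupp.single j 1), ?_, ?_⟩
        · rw [mul_comm]; exact (divMonomial_add_modMonomial x _).symm
        · rw [mem_sr hD]
          intro m hm
          rw [mem_support_iff] at hm
          by_cases hj : Finsupp.single j 1 ≤ m
          · exact absurd (coeff_modMonomial_of_le x hj) hm
          · rw [coeff_modMonomial_of_not_le x hj] at hm
            have := hx m (mem_support_iff.2 hm)
            rw [e2] at this
            intro hDm
            apply this
            refine ⟨?_, hDm⟩
            intro hjm
            apply hj
            rw [Finsupp.single_le_iff]
            rw [Finsupp.mem_support_iff] at hjm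
            omega
      refine ⟨Submodule.Quotient.mk q, ?_⟩
      change Submodule.Quotient.mk (q * X j) = Submodule.Quotient.mk x
      rw [Submodule.Quotient.eq, hqb]
      have : q * X j - (q * X j + b) = - b := by ring
      rw [this]
      exact neg_mem hb
    · rintro ⟨y, hy⟩
      obtain ⟨y, rfl⟩ := Submodule.mkQ_surjective _ y
      have hy : Submodule.Quotient.mk (y * X j) = (Submodule.Quotient.mk x : MvPolynomial σ K ⧸ srIdeal K D) := hy
      rw [Submodule.Quotient.eq] at hy
      apply (Submodule.Quotient.mk_eq_zero _).2
      have h3 : y * X j ∈ srIdeal K D2 := by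
        rw [hX, mul_mon_mem_sr h2d, hs]
        intro m _ h
        exact ((e2 _).1 h).1 (by simp)
      have := sub_mem h3 (hle hy)
      simpa using this
  · exact Submodule.factor_surjective hle

theorem esymm_mod (B : Finset σ) :
    esymm σ K B.card - ∏ i ∈ B, X i ∈ srIdeal K (fun s => s ⊆ B) := by
  have hD : DownC (fun s => s ⊆ B) := fun s t h h' => h.trans h'
  rw [esymm, ← Finset.sum_erase_add _ _ (Finset.mem_powersetCard.2 ⟨Finset.subset_univ B, rfl⟩)]
  rw [add_sub_cancel_right]
  apply sum_mem
  intro t ht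
  rw [Finset.mem_erase, Finset.mem_powersetCard] at ht
  rw [prodX_mem hD]
  intro h
  exact ht.1 (Finset.eq_of_subset_of_card_le h ht.2.2.ge)

open RingTheory.Sequence Pointwise in
theorem WR.simplex_step (B : Finset σ) (r : ℕ) (hr : B.card = r + 1)
    (h : WR K (fun s => s ⊆ B ∧ s ≠ B) r) : WR K (fun s => s ⊆ B) (r + 1) := by
  have hD : DownC (fun s => s ⊆ B) := fun s t h h' => h.trans h'
  have hD' : DownC (fun s => s ⊆ B ∧ s ≠ B) := fun s t h h' =>
    ⟨h.trans h'.1, fun e => h'.2 (h'.1.antisymm (e ▸ h))⟩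
  have hmod := esymm_mod (K := K) B
  rw [hr] at hmod
  have hcol : ∀ f : MvPolynomial σ K, f * ∏ i ∈ B, X i ∈ srIdeal K (fun s => s ⊆ B) ↔
      f ∈ srIdeal K (fun s => s ⊆ B) := by
    intro f
    rw [prodX_eq, mul_mon_mem_sr hD, mem_sr hD, prodX_supp]
    simp [Finset.union_subset_iff]
  have hle : srIdeal K (fun s => s ⊆ B) ≤ srIdeal K (fun s => s ⊆ B ∧ s ≠ B) := by
    intro f hf
    rw [mem_sr hD] at hf
    rw [mem_sr hD']
    exact fun m hm h => hf m hm h.1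
  rw [WR, eseq, isWeaklyRegular_cons_iff]
  constructor
  · rw [isSMulRegular_quotient_iff_mem_of_smul_mem]
    intro x hx
    rw [← hcol]
    have := sub_mem hx (Ideal.mul_mem_left _ x hmod)
    rw [smul_eq_mul] at this
    convert this using 1
    ring
  · let φ := Submodule.factor hle
    have hφ : Function.Surjective φ := Submodule.factor_surjective hle
    have hker : (esymm σ K (r+1)) • (⊤ : Submodule (MvPolynomial σ K)
        (MvPolynomial σ K ⧸ srIdeal K (fun s => s ⊆ B))) = LinearMap.ker φ := by
      ext x
      rw [Submodule.mem_smul_pointwise_iff_exists]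
      obtain ⟨x, rfl⟩ := Submodule.mkQ_surjective _ x
      have hk : (srIdeal K (fun s => s ⊆ B)).mkQ x ∈ LinearMap.ker φ ↔
        x ∈ srIdeal K (fun s => s ⊆ B ∧ s ≠ B) := Submodule.Quotient.mk_eq_zero _
      rw [hk]
      constructor
      · rintro ⟨y, -, hy⟩
        obtain ⟨y, rfl⟩ := Submodule.mkQ_surjective _ y
        have hy : Submodule.Quotient.mk (esymm σ K (r+1) * y) =
          (Submodule.Quotient.mk x : MvPolynomial σ K ⧸ srIdeal K (fun s => s ⊆ B)) := hy
        rw [Submodule.Quotient.eq] at hy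
        have h1 : esymm σ K (r+1) ∈ srIdeal K (fun s => s ⊆ B ∧ s ≠ B) := by
          have h2 : (∏ i ∈ B, X i : MvPolynomial σ K) ∈ srIdeal K (fun s => s ⊆ B ∧ s ≠ B) := by
            rw [prodX_mem hD']; simp
          simpa using add_mem (hle hmod) h2
        have := sub_mem (Ideal.mul_mem_right y _ h1) (hle hy)
        simpa using this
      · intro hx
        rw [mem_sr hD'] at hx
        obtain ⟨q, b, hqb, hb⟩ : ∃ q b : MvPolynomial σ K, x = q * ∏ i ∈ B, X i + b ∧
            b ∈ srIdeal K (fun s => s ⊆ B) := by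
          rw [prodX_eq]
          refine ⟨x.divMonomial (∑ i ∈ B, Finsupp.single i 1),
            x.modMonomial (∑ i ∈ B, Finsupp.single i 1), ?_, ?_⟩
          · rw [mul_comm]; exact (divMonomial_add_modMonomial x _).symm
          · rw [mem_sr hD]
            intro m hm
            rw [mem_support_iff] at hm
            by_cases hj : (∑ i ∈ B, Finsupp.single i 1) ≤ m
            · exact absurd (coeff_modMonomial_of_le x hj) hm
            · rw [coeff_modMonomial_of_not_le x hj] at hm
              have := hx m (mem_support_iff.2 hm)
              intro hDm
              apply this
              refine ⟨hDm, ?_⟩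
              intro hjm
              apply hj
              intro i
              by_cases hi : i ∈ B
              · have h5 : m i ≠ 0 := by rw [← Finsupp.mem_support_iff, hjm]; exact hi
                simp [Finsupp.finsetSum_apply, Finsupp.single_apply, hi]
                omega
              · simp [Finsupp.finsetSum_apply, Finsupp.single_apply, hi]
        refine ⟨Submodule.Quotient.mk q, trivial, ?_⟩
        change Submodule.Quotient.mk (esymm σ K (r+1) * q) = Submodule.Quotient.mk x
        rw [Submodule.Quotient.eq, hqb]
        have := sub_mem (Ideal.mul_mem_left _ q hmod) hb
        convert this using 1
        ring
    have e : QuotSMulTop (esymm σ K (r+1)) (MvPolynomial σ K ⧸ srIdeal K (fun s => s ⊆ B)) ≃ₗ[MvPolynomial σ K]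
        (MvPolynomial σ K ⧸ srIdeal K (fun s => s ⊆ B ∧ s ≠ B)) :=
      (Submodule.quotEquivOfEq _ _ hker).trans (LinearMap.quotKerEquivOfSurjective φ hφ)
    exact (e.isWeaklyRegular_congr _).2 h

theorem WR.congr {D D' : Finset σ → Prop} {r : ℕ} (h : WR K D r) (e : ∀ s, D s ↔ D' s) :
    WR K D' r := by
  have : D = D' := funext fun s => propext (e s)
  rwa [← this]

/-- the mixed complex -/
def JC (A B : Finset σ) (d : ℕ) (s : Finset σ) : Prop := s ⊆ A ∪ B ∧ (s ∩ A).card < d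

theorem JC_down (A B : Finset σ) (d : ℕ) : DownC (JC A B d) := fun s t h h' =>
  ⟨h.trans h'.1, (Finset.card_le_card (Finset.inter_subset_inter_right h)).trans_lt h'.2⟩

theorem WR.JC_of (r : ℕ) (hs : ∀ B : Finset σ, B.card = r → WR K (fun s => s ⊆ B) r) :
    ∀ (a : ℕ) (A B : Finset σ) (d : ℕ), A.card = a → Disjoint A B → d ≤ a →
      B.card + d = r → WR K (JC A B (d+1)) r := by
  intro a
  induction a with
  | zero =>
    intro A B d hA hAB hd hr
    obtain rfl : d = 0 := by omega
    rw [Finset.card_eq_zero] at hA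
    subst hA
    refine (hs B (by omega)).congr fun s => ?_
    simp [JC]
  | succ a ih =>
    intro A B d hA hAB hd hr
    rcases Nat.eq_zero_or_pos d with rfl | hd0
    · refine (hs B (by omega)).congr fun s => ?_
      simp only [JC, Nat.lt_one_iff, zero_add, Finset.card_eq_zero]
      rw [← Finset.disjoint_iff_inter_eq_empty]
      constructor
      · intro h
        exact ⟨h.trans Finset.subset_union_right, (hAB.mono_right h).symm⟩
      · rintro ⟨h1, h2⟩ x hx
        rcases Finset.mem_union.1 (h1 hx) with h | h
        · exact absurd h (Finset.disjoint_left.1 h2 hx)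
        · exact h
    rcases hd.eq_or_lt with hda | hda
    · refine (hs (A ∪ B) (by rw [Finset.card_union_of_disjoint hAB]; omega)).congr fun s => ?_
      simp only [JC]
      have := Finset.card_le_card (Finset.inter_subset_right (s₁ := s) (s₂ := A))
      constructor
      · intro h; exact ⟨h, by omega⟩
      · exact fun h => h.1
    obtain ⟨j, hj⟩ : A.Nonempty := by rw [← Finset.card_pos]; omega
    have hjB : j ∉ B := Finset.disjoint_left.1 hAB hj
    obtain ⟨d, rfl⟩ : ∃ d', d = d' + 1 := ⟨d - 1, by omega⟩
    have hc : (A.erase j).card = a := by rw [Finset.card_erase_of_mem hj]; omega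
    have h1 := ih (A.erase j) (insert j B) d hc
      (by rw [Finset.disjoint_left] at hAB ⊢; grind) (by omega)
      (by rw [Finset.card_insert_of_notMem hjB]; omega)
    have h2 := ih (A.erase j) B (d+1) hc
      (by rw [Finset.disjoint_left] at hAB ⊢; grind) (by omega) hr
    refine WR.ext (JC_down _ _ _) (JC_down _ _ _) (JC_down _ _ _) j ?_ ?_ h1 h2
    · intro s
      have e1 : A.erase j ∪ insert j B = A ∪ B := by ext; grind
      have e2 : insert j s ∩ A = insert j (s ∩ A.erase j) := by ext; grind
      have e3 : j ∉ s ∩ A.erase j := by simp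
      simp only [JC, e1, e2, Finset.card_insert_of_notMem e3]
      rw [Finset.insert_subset_iff]
      simp [hj]
    · intro s
      simp only [JC]
      constructor
      · rintro ⟨h3, h4⟩
        have hjs : j ∉ s := fun h => by have := h3 h; grind
        refine ⟨hjs, by grind, ?_⟩
        have e : s ∩ A = s ∩ A.erase j := by ext; grind
        rwa [e]
      · rintro ⟨hjs, h3, h4⟩
        have e : s ∩ A = s ∩ A.erase j := by ext; grind
        exact ⟨fun x hx => by have := h3 hx; grind, e ▸ h4⟩

theorem WR.simplex (r : ℕ) : ∀ B : Finset σ, B.card = r → WR K (fun s => s ⊆ B) r := by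
  induction r with
  | zero => intro B _; exact RingTheory.Sequence.IsWeaklyRegular.nil _ _
  | succ r ih =>
    intro B hB
    apply WR.simplex_step B r hB
    refine (WR.JC_of r ih (r+1) B ∅ r hB (by simp) (by omega) (by simp)).congr fun s => ?_
    simp only [JC, Finset.union_empty]
    refine and_congr_right fun h => ?_
    rw [Finset.inter_eq_left.2 h]
    constructor
    · rintro h1 rfl; omega
    · intro h1
      have := Finset.card_lt_card (h.ssubset_of_ne h1)
      omega

theorem eseq_length (r : ℕ) : (eseq K σ r).length = r := by
  induction r with
  | zero => rfl
  | succ r ih => simp [eseq, ih]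

theorem mem_max_iff (f : MvPolynomial σ K) :
    f ∈ Ideal.span (Set.range (X : σ → MvPolynomial σ K)) ↔ constantCoeff f = 0 := by
  rw [← Set.image_univ, mem_ideal_span_X_image]
  constructor
  · intro h
    by_contra h0
    obtain ⟨i, _, hi⟩ := h 0 (by rw [mem_support_iff]; exact h0)
    simp at hi
  · intro h m hm
    by_contra hc
    push Not at hc
    have : m = 0 := by ext i; simpa using hc i trivial
    subst this
    rw [mem_support_iff] at hm
    exact hm h

theorem eseq_mem (r : ℕ) : ∀ f ∈ eseq K σ r,
    f ∈ Ideal.span (Set.range (X : σ → MvPolynomial σ K)) := by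
  induction r with
  | zero => simp [eseq]
  | succ r ih =>
    intro f hf
    rw [eseq, List.mem_cons] at hf
    rcases hf with rfl | hf
    · rw [esymm]
      apply sum_mem
      intro t ht
      rw [Finset.mem_powersetCard] at ht
      obtain ⟨i, hi⟩ : t.Nonempty := by rw [← Finset.card_pos]; omega
      rw [← Finset.mul_prod_erase _ _ hi]
      exact Ideal.mul_mem_right _ _ (Ideal.subset_span ⟨i, rfl⟩)
    · exact ih f hf

theorem dim_le {D : Finset σ → Prop} (hD : DownC D) (r : ℕ) (hr : ∀ s, D s → s.card ≤ r) :
    ringKrullDim (MvPolynomial σ K ⧸ srIdeal K D) ≤ r := by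
  rw [ringKrullDim_quotient]
  refine iSup_le fun p => ?_
  classical
  let P := p.head.1
  let B : Finset σ := Finset.univ.filter fun i => X i ∉ P.asIdeal
  have hB : D B := by
    by_contra h
    have h1 := (prodX_mem (K := K) hD B).2 h
    have h2 : (∏ i ∈ B, X i : MvPolynomial σ K) ∈ P.asIdeal := p.head.2 h1
    rw [Ideal.IsPrime.prod_mem_iff] at h2
    obtain ⟨i, hi, hi'⟩ := h2
    exact (Finset.mem_filter.1 hi).2 hi'
  have hBc := hr B hB
  let J : Ideal (MvPolynomial σ K) := Ideal.span (X '' {i | i ∉ B})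
  have hJ : J ≤ P.asIdeal := by
    rw [Ideal.span_le]
    rintro _ ⟨i, hi, rfl⟩
    by_contra h
    exact hi (Finset.mem_filter.2 ⟨Finset.mem_univ _, h⟩)
  -- chain in zeroLocus J
  let q : LTSeries (PrimeSpectrum.zeroLocus (J : Set (MvPolynomial σ K))) :=
    { length := p.length
      toFun := fun i => ⟨(p i).1, fun x hx => (p.head_le i : p.head ≤ p i) (hJ hx)⟩
      step := fun i => p.step i }
  have h1 : (p.length : WithBot ℕ∞) ≤ ringKrullDim (MvPolynomial σ K ⧸ J) := by
    rw [ringKrullDim_quotient]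
    exact le_iSup_of_le q le_rfl
  refine h1.trans ?_
  let φ : MvPolynomial B K →+* MvPolynomial σ K ⧸ J :=
    (Ideal.Quotient.mk J).comp (rename (Subtype.val : B → σ)).toRingHom
  have hφ : Function.Surjective φ := by
    intro y
    obtain ⟨y, rfl⟩ := Ideal.Quotient.mk_surjective y
    induction y using MvPolynomial.induction_on with
    | C a => exact ⟨C a, by simp [φ]⟩
    | add a b ha hb =>
      obtain ⟨a', ha⟩ := ha
      obtain ⟨b', hb⟩ := hb
      exact ⟨a' + b', by rw [map_add, ha, hb, map_add]⟩
    | mul_X a i ha =>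
      obtain ⟨a', ha⟩ := ha
      by_cases hi : i ∈ B
      · exact ⟨a' * X ⟨i, hi⟩, by rw [map_mul, ha, map_mul]; simp [φ]⟩
      · refine ⟨0, ?_⟩
        rw [map_zero, map_mul]
        have : Ideal.Quotient.mk J (X i) = 0 :=
          Ideal.Quotient.eq_zero_iff_mem.2 (Ideal.subset_span ⟨i, hi, rfl⟩)
        rw [this, mul_zero]
  have h2 := ringKrullDim_le_of_surjective φ hφ
  refine h2.trans ?_
  rw [MvPolynomial.ringKrullDim_of_isNoetherianRing, ringKrullDim_eq_zero_of_field, zero_add]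
  simp only [Nat.card_eq_fintype_card, Fintype.card_coe]
  exact_mod_cast hBc

open RingTheory.Sequence in
theorem qdepth_sr {D : Finset σ → Prop} (hD : DownC D) (h0 : D ∅) (r : ℕ)
    (hr : ∀ s, D s → s.card ≤ r) (h : WR K D r) : qdepth K (srIdeal K D) = r := by
  apply IsGreatest.csSup_eq
  constructor
  · refine ⟨eseq K σ r, eseq_length r, eseq_mem r, h, ?_⟩
    intro htop
    have hle : (srIdeal K D) ≤ Ideal.span (Set.range (X : σ → MvPolynomial σ K)) := by
      intro f hf
      rw [mem_max_iff]
      by_contra hc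
      exact (mem_sr hD f).1 hf 0 (by rw [mem_support_iff]; exact hc) (by simpa using h0)
    have hof : Ideal.ofList (eseq K σ r) ≤ Ideal.span (Set.range (X : σ → MvPolynomial σ K)) :=
      Ideal.span_le.2 (eseq_mem r)
    have h1 : (Submodule.Quotient.mk 1 : MvPolynomial σ K ⧸ srIdeal K D) ∈
        Ideal.ofList (eseq K σ r) • (⊤ : Submodule (MvPolynomial σ K) (MvPolynomial σ K ⧸ srIdeal K D)) := by
      rw [← htop]; trivial
    have h2 : Ideal.ofList (eseq K σ r) • (⊤ : Submodule (MvPolynomial σ K) (MvPolynomial σ K ⧸ srIdeal K D))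
        ≤ Submodule.map (srIdeal K D).mkQ (Ideal.span (Set.range (X : σ → MvPolynomial σ K))) := by
      rw [Submodule.smul_le]
      intro a ha x _
      obtain ⟨x, rfl⟩ := Submodule.mkQ_surjective _ x
      exact ⟨a * x, Ideal.mul_mem_right _ _ (hof ha), rfl⟩
    obtain ⟨y, hy, hy'⟩ := h2 h1
    have hy' : (Submodule.Quotient.mk y : MvPolynomial σ K ⧸ srIdeal K D) = Submodule.Quotient.mk 1 := hy'
    rw [Submodule.Quotient.eq] at hy'
    have := sub_mem hy (hle hy')
    rw [sub_sub_cancel, mem_max_iff] at this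
    simp at this
  · rintro m ⟨l, rfl, _, hl⟩
    have h1 := wreg_length_le l hl
    rw [Module.supportDim_quotient_eq_ringKrullDim] at h1
    exact_mod_cast h1.trans (dim_le hD r hr)

end SR

section PathPart
variable {K : Type*} [Field K] {n : ℕ}

theorem pathc_adj (i j : Fin n) : (SimpleGraph.pathGraph n)ᶜ.Adj i j ↔
    i.val + 1 < j.val ∨ j.val + 1 < i.val := by
  rw [SimpleGraph.compl_adj, SimpleGraph.pathGraph_adj, Ne, Fin.ext_iff]
  omega

def PC (n m : ℕ) (s : Finset (Fin n)) : Prop :=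
  (∀ i ∈ s, i.val < m) ∧ ∀ i ∈ s, ∀ j ∈ s, i.val ≤ j.val + 1

theorem PC_down (m : ℕ) : DownC (PC n m) := fun _ _ h h' =>
  ⟨fun i hi => h'.1 i (h hi), fun i hi j hj => h'.2 i (h hi) j (h hj)⟩

theorem PC_card (m : ℕ) (s : Finset (Fin n)) (h : PC n m s) : s.card ≤ 2 := by
  by_contra hc
  push Not at hc
  obtain ⟨a, ha, b, hb, c, hcc, hab, hac, hbc⟩ := Finset.two_lt_card.1 hc
  have h1 := h.2 a ha b hb
  have h2 := h.2 b hb a ha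
  have h3 := h.2 a ha c hcc
  have h4 := h.2 c hcc a ha
  have h5 := h.2 b hb c hcc
  have h6 := h.2 c hcc b hb
  rw [Ne, Fin.ext_iff] at hab hac hbc
  omega

theorem PC_WR (m : ℕ) (h2 : 2 ≤ m) : m ≤ n → WR K (PC n m) 2 := by
  induction m, h2 using Nat.le_induction with
  | base =>
    intro hn
    have h := WR.simplex (K := K) 2 ({⟨0, by omega⟩, ⟨1, by omega⟩} : Finset (Fin n))
      (by rw [Finset.card_pair]; rw [Ne, Fin.ext_iff]; simp)
    refine h.congr fun s => ?_
    constructor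
    · intro h
      have key : ∀ i ∈ s, i.val < 2 := by
        intro i hi
        have := h hi
        simp only [Finset.mem_insert, Finset.mem_singleton, Fin.ext_iff] at this
        omega
      exact ⟨key, fun i hi j hj => by have := key i hi; have := key j hj; omega⟩
    · intro h i hi
      have := h.1 i hi
      simp only [Finset.mem_insert, Finset.mem_singleton, Fin.ext_iff]
      omega
  | succ m hm ih =>
    intro hn
    have h1 := WR.simplex (K := K) 2 ({⟨m - 1, by omega⟩, ⟨m, by omega⟩} : Finset (Fin n))
      (by rw [Finset.card_pair]; rw [Ne, Fin.ext_iff]; simp only; omega)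
    refine WR.ext (PC_down _) (fun _ _ h h' => h.trans h') (PC_down m) ⟨m, by omega⟩ ?_ ?_ h1
      (ih (by omega))
    · intro s
      constructor
      · intro h
        have key : ∀ i ∈ insert (⟨m, by omega⟩ : Fin n) s, i.val = m - 1 ∨ i.val = m := by
          intro i hi
          rw [Finset.mem_insert] at hi
          rcases hi with rfl | hi
          · simp
          · have := h hi
            simpa only [Finset.mem_insert, Finset.mem_singleton, Fin.ext_iff] using this
        exact ⟨fun i hi => by have := key i hi; omega,
          fun i hi j hj => by have := key i hi; have := key j hj; omega⟩
      · intro h i hi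
        have h3 := h.1 i (Finset.mem_insert_of_mem hi)
        have h4 := h.2 _ (Finset.mem_insert_self _ _) i (Finset.mem_insert_of_mem hi)
        simp only [Finset.mem_insert, Finset.mem_singleton, Fin.ext_iff] at h4 ⊢
        omega
    · intro s
      constructor
      · intro h
        refine ⟨fun hms => ?_, fun i hi => by have := h.1 i hi; omega, h.2⟩
        have := h.1 _ hms
        simp at this
      · rintro ⟨h3, h4, h5⟩
        refine ⟨fun i hi => ?_, h5⟩
        have := h4 i hi
        have h6 : i.val ≠ m := by
          intro e
          apply h3
          have : i = ⟨m, by omega⟩ := Fin.ext e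
          rwa [← this]
        omega

theorem edge_eq : edgeIdeal K (SimpleGraph.pathGraph n)ᶜ = srIdeal K (PC n n) := by
  apply le_antisymm
  · rw [edgeIdeal, Ideal.span_le]
    rintro _ ⟨i, j, hij, rfl⟩
    have hne : i ≠ j := hij.ne
    rw [← Finset.prod_pair hne, SetLike.mem_coe, prodX_mem (PC_down n)]
    intro h
    rw [pathc_adj] at hij
    have h1 := h.2 i (by simp) j (by simp)
    have h2 := h.2 j (by simp) i (by simp)
    omega
  · rw [srIdeal, Ideal.span_le]
    rintro _ ⟨m, hm, rfl⟩
    simp only [Set.mem_setOf_eq, PC, Fin.is_lt, implies_true, true_and] at hm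
    push Not at hm
    obtain ⟨i, hi, j, hj, hij⟩ := hm
    rw [Finsupp.mem_support_iff] at hi hj
    have hne : i ≠ j := by rintro rfl; omega
    have hmem : (X i * X j : MvPolynomial (Fin n) K) ∈ edgeIdeal K (SimpleGraph.pathGraph n)ᶜ :=
      Ideal.subset_span ⟨i, j, (pathc_adj i j).2 (Or.inr hij), rfl⟩
    refine Ideal.mem_of_dvd _ ?_ hmem
    rw [X, X, monomial_mul, one_mul, monomial_dvd_monomial]
    refine ⟨Or.inr ?_, dvd_rfl⟩
    intro k
    simp only [Finsupp.add_apply, Finsupp.single_apply]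
    split_ifs with h1 h2 h2
    · exact absurd (h1.trans h2.symm) hne
    · subst h1; omega
    · subst h2; omega
    · omega

theorem veronese_eq {σ : Type*} [Fintype σ] [DecidableEq σ] (d : ℕ) :
    (veronese K d : Ideal (MvPolynomial σ K)) = srIdeal K (JC Finset.univ ∅ d) := by
  have hJ : ∀ s : Finset σ, JC Finset.univ ∅ d s ↔ s.card < d := by
    intro s; simp [JC]
  apply le_antisymm
  · rw [veronese, Ideal.span_le]
    rintro _ ⟨F, hF, rfl⟩
    rw [SetLike.mem_coe, prodX_mem (JC_down _ _ _), hJ]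
    omega
  · rw [srIdeal, Ideal.span_le]
    rintro _ ⟨m, hm, rfl⟩
    rw [Set.mem_setOf_eq, hJ, not_lt] at hm
    obtain ⟨F, hF, hFc⟩ := Finset.exists_subset_card_eq hm
    have hmem : (∏ i ∈ F, X i : MvPolynomial σ K) ∈ veronese K d :=
      Ideal.subset_span ⟨F, hFc, rfl⟩
    refine Ideal.mem_of_dvd _ ?_ hmem
    rw [prodX_eq, monomial_dvd_monomial]
    refine ⟨Or.inr ?_, dvd_rfl⟩
    intro k
    by_cases hk : k ∈ F
    · have := Finsupp.mem_support_iff.1 (hF hk)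
      simp [Finsupp.finsetSum_apply, Finsupp.single_apply, hk]
      omega
    · simp [Finsupp.finsetSum_apply, Finsupp.single_apply, hk]

theorem mVerts_card {σ : Type*} [Fintype σ] [DecidableEq σ] (G : SimpleGraph σ)
    (M : Finset (Sym2 σ)) (k : ℕ) (h : IsKMatching G M k) : (mVerts M).card = 2 * k := by
  classical
  have e : mVerts M = M.biUnion Sym2.toFinset := by
    ext v; simp [mVerts]
  rw [e, Finset.card_biUnion]
  · rw [Finset.sum_const_nat (m := 2), h.2, mul_comm]
    intro x hx
    exact Sym2.card_toFinset_of_not_isDiag x (G.not_isDiag_of_mem_edgeSet (h.1.1 hx))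
  · intro x hx y hy hxy
    rw [Function.onFun, Finset.disjoint_left]
    intro v hv hv'
    rw [Sym2.mem_toFinset] at hv hv'
    exact h.1.2 hx hy hxy v hv hv'

theorem exists_matching (k : ℕ) (hk : 2 ≤ k) (F : Finset (Fin n)) (hF : F.card = 2 * k) :
    ∃ M : Finset (Sym2 (Fin n)), IsKMatching (SimpleGraph.pathGraph n)ᶜ M k ∧ mVerts M = F := by
  classical
  let e := F.orderEmbOfFin hF
  have hgap : ∀ (t : ℕ) (i j : Fin (2 * k)), i.val + t = j.val → (e i).val + t ≤ (e j).val := by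
    intro t
    induction t with
    | zero => intro i j h; have : i = j := Fin.ext h; simp [this]
    | succ t ih =>
      intro i j h
      have h1 := ih i ⟨i.val + t, by omega⟩ rfl
      have h2 : e ⟨i.val + t, by omega⟩ < e j := e.strictMono (by rw [Fin.lt_def]; simp; omega)
      rw [Fin.lt_def] at h2
      omega
  let a : Fin k → Fin (2 * k) := fun i => ⟨i.val, by omega⟩
  let b : Fin k → Fin (2 * k) := fun i => ⟨i.val + k, by omega⟩
  let g : Fin k → Sym2 (Fin n) := fun i => s(e (a i), e (b i))
  have hdisj : ∀ i j v, v ∈ g i → v ∈ g j → i = j := by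
    intro i j v h1 h2
    simp only [g, Sym2.mem_iff] at h1 h2
    rcases h1 with h1 | h1 <;> rcases h2 with h2 | h2 <;>
    · have h3 := e.injective (h1.symm.trans h2)
      simp only [a, b, Fin.ext_iff] at h3
      apply Fin.ext
      omega
  have hinj : Function.Injective g := by
    intro i j hij
    refine hdisj i j (e (a i)) (by simp [g]) ?_
    rw [← hij]; simp [g]
  have hM : IsKMatching (SimpleGraph.pathGraph n)ᶜ (Finset.univ.image g) k := by
    refine ⟨⟨?_, ?_⟩, ?_⟩
    · intro x hx
      simp only [Finset.coe_image, Finset.coe_univ, Set.image_univ, Set.mem_range] at hx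
      obtain ⟨i, rfl⟩ := hx
      rw [SimpleGraph.mem_edgeSet, pathc_adj]
      have := hgap k (a i) (b i) rfl
      omega
    · intro x hx y hy hxy v hv hv'
      simp only [Finset.coe_image, Finset.coe_univ, Set.image_univ, Set.mem_range] at hx hy
      obtain ⟨i, rfl⟩ := hx
      obtain ⟨j, rfl⟩ := hy
      exact hxy (congrArg g (hdisj i j v hv hv'))
    · rw [Finset.card_image_of_injective _ hinj]; simp
  refine ⟨_, hM, ?_⟩
  apply Finset.eq_of_subset_of_card_le
  · intro v hv
    simp only [mVerts, Finset.mem_filter, Finset.mem_univ, true_and, Finset.mem_image] at hv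
    obtain ⟨x, ⟨i, rfl⟩, hv⟩ := hv
    simp only [g, Sym2.mem_iff] at hv
    rcases hv with rfl | rfl <;> exact Finset.orderEmbOfFin_mem F hF _
  · rw [mVerts_card _ _ _ hM, hF]

theorem matchPow_eq_s18 (k : ℕ) (hk : 2 ≤ k) :
    matchPow K (SimpleGraph.pathGraph n)ᶜ k = veronese K (2 * k) := by
  rw [matchPow, veronese]
  congr 1
  ext u
  constructor
  · rintro ⟨M, hM, rfl⟩
    exact ⟨mVerts M, mVerts_card _ _ _ hM, rfl⟩
  · rintro ⟨F, hF, rfl⟩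
    obtain ⟨M, hM, hMF⟩ := exists_matching k hk F hF
    exact ⟨M, hM, by rw [matchMon, hMF]⟩

theorem two_k_le (k : ℕ) (hk : 2 ≤ k) (h : k ≤ matchNum (SimpleGraph.pathGraph n)ᶜ) :
    2 * k ≤ n := by
  have key : ∀ m ∈ {k | ∃ M : Finset (Sym2 (Fin n)), IsKMatching (SimpleGraph.pathGraph n)ᶜ M k},
      2 * m ≤ n := by
    rintro m ⟨M, hM⟩
    rw [← mVerts_card _ _ _ hM]
    simpa using Finset.card_le_univ (mVerts M)
  have hne : {k | ∃ M : Finset (Sym2 (Fin n)),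
      IsKMatching (SimpleGraph.pathGraph n)ᶜ M k}.Nonempty := by
    by_contra hc
    rw [Set.not_nonempty_iff_eq_empty] at hc
    rw [matchNum, hc] at h
    simp at h
    omega
  have := key _ (Nat.sSup_mem hne ⟨n, fun m hm => by have := key m hm; omega⟩)
  rw [matchNum] at h
  omega

end PathPart

/-- Let `n ≥ 4` and `G = P_n^c` be the complement of the path
graph, with edge ideal `I = I(G)`. Then `depth(S/I) = 2`, and for every
`2 ≤ k ≤ ν(G)` one has `I^{[k]} = 𝔪^{[2k]}` (the squarefree Veronese ideal of
degree `2k`); consequently `depth(S/I^{[k]}) = 2k − 1` for all such `k`. -/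
theorem path_complement_depths {K : Type*} [Field K] (n : ℕ) (hn : 4 ≤ n) :
    qdepth K (edgeIdeal K (SimpleGraph.pathGraph n)ᶜ) = 2 ∧
    ∀ k : ℕ, 2 ≤ k → k ≤ matchNum (SimpleGraph.pathGraph n)ᶜ →
      matchPow K (SimpleGraph.pathGraph n)ᶜ k = veronese K (2 * k) ∧
      qdepth K (matchPow K (SimpleGraph.pathGraph n)ᶜ k) = 2 * k - 1 := by
  refine ⟨?_, ?_⟩
  · rw [edge_eq]
    exact qdepth_sr (PC_down n) ⟨by simp, by simp⟩ 2 (PC_card n) (PC_WR n (by omega) le_rfl)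
  · intro k hk hkn
    refine ⟨matchPow_eq_s18 k hk, ?_⟩
    have h2 := two_k_le k hk hkn
    rw [matchPow_eq_s18 k hk, veronese_eq]
    refine qdepth_sr (JC_down _ _ _) ⟨by simp, by simp; omega⟩ (2 * k - 1) ?_ ?_
    · intro s hs
      have := hs.2
      rw [Finset.inter_univ] at this
      omega
    · have := WR.JC_of (K := K) (2 * k - 1) (WR.simplex (2 * k - 1)) n
        (Finset.univ : Finset (Fin n)) ∅ (2 * k - 1) (by simp) (by simp) (by omega) (by simp)
      rwa [Nat.sub_add_cancel (by omega)] at this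
end
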